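/- arXiv:2506.16397 — 12 statements merged into one kernel-verified Lean document; each statement's English description precedes it below -/
import Mathlib

section
/- Let F be a field, β ∈ F, and n ≥ 1. For each nonempty subset T ⊆ {1,…,n} let L_T(z) = Σ_{i∈T} z_i. Then in the polynomial ∏_{∅≠T⊆{1,…,n}} (L_T(z) − β) ∈ F[z_1,…,z_n], the coefficient of the monomial ∏_{i=1}^n z_i^{2^{i−1}} equals 1 (in particular this coefficient is nonzero over fields of every characteristic). -/
open scoped MonomialOrder in
lemma exists_order_aux (n : ℕ) : ∃ m : MonomialOrder.{0, 0} (Fin n), ∀ i j : Fin n, i < j →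
    m.toSyn (Finsupp.single i 1) < m.toSyn (Finsupp.single j 1) := by
  refine ⟨(MonomialOrder.lex : MonomialOrder (Fin n)ᵒᵈ), fun i j h => ?_⟩
  exact (Finsupp.Lex.single_lt_iff (α := (Fin n)ᵒᵈ) (a := OrderDual.toDual j)
    (b := OrderDual.toDual i)).2 h

lemma factor_aux {F : Type*} [Field F] {n : ℕ} (m : MonomialOrder (Fin n))
    (hm : ∀ i j : Fin n, i < j → m.toSyn (Finsupp.single i 1) < m.toSyn (Finsupp.single j 1))
    (β : F) (T : Finset (Fin n)) (hT : T.Nonempty) :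
    m.Monic ((∑ i ∈ T, MvPolynomial.X i) - MvPolynomial.C β : MvPolynomial (Fin n) F) ∧
    m.degree ((∑ i ∈ T, MvPolynomial.X i) - MvPolynomial.C β : MvPolynomial (Fin n) F)
      = Finsupp.single (T.max' hT) 1 := by
  have hpos : (0 : m.syn) < m.toSyn (Finsupp.single (T.max' hT) 1) := by
    rw [MonomialOrder.toSyn_lt_iff_ne_zero]
    simp
  have e : ((∑ i ∈ T, MvPolynomial.X i) - MvPolynomial.C β : MvPolynomial (Fin n) F)
      = MvPolynomial.X (T.max' hT) +
        ((∑ i ∈ T.erase (T.max' hT), MvPolynomial.X i) - MvPolynomial.C β) := by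
    rw [← Finset.add_sum_erase T _ (T.max'_mem hT)]
    ring
  have hlt : m.toSyn (m.degree ((∑ i ∈ T.erase (T.max' hT), MvPolynomial.X i)
      - MvPolynomial.C β : MvPolynomial (Fin n) F)) <
      m.toSyn (m.degree (MvPolynomial.X (T.max' hT) : MvPolynomial (Fin n) F)) := by
    rw [MonomialOrder.degree_X]
    refine lt_of_le_of_lt m.degree_sub_le (max_lt ?_ ?_)
    · refine lt_of_le_of_lt m.degree_sum_le ?_
      rw [Finset.sup_lt_iff (by simpa [bot_eq_zero] using hpos)]
      intro i hi
      rw [MonomialOrder.degree_X]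
      exact hm _ _ (lt_of_le_of_ne (T.le_max' i (Finset.mem_of_mem_erase hi))
        (Finset.ne_of_mem_erase hi))
    · simpa using hpos
  rw [e]
  exact ⟨m.monic_X.add_of_lt hlt, by rw [MonomialOrder.degree_add_of_lt hlt, MonomialOrder.degree_X]⟩

lemma card_aux {n : ℕ} (i : Fin n) :
    (Finset.univ.filter fun T : Finset (Fin n) => ∃ h : T.Nonempty, T.max' h = i).card
      = 2 ^ (i : ℕ) := by
  rw [← Fin.card_Iio i, ← Finset.card_powerset]
  symm
  refine Finset.card_bij' (fun S _ => insert i S) (fun T _ => T.erase i) ?_ ?_ ?_ ?_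
  · intro S hS
    rw [Finset.mem_powerset] at hS
    simp only [Finset.mem_filter, Finset.mem_univ, true_and]
    refine ⟨Finset.insert_nonempty _ _, ?_⟩
    apply le_antisymm
    · apply Finset.max'_le
      intro y hy
      rcases Finset.mem_insert.1 hy with rfl | hy
      · exact le_rfl
      · exact (Finset.mem_Iio.1 (hS hy)).le
    · exact Finset.le_max' _ _ (Finset.mem_insert_self _ _)
  · intro T hT
    simp only [Finset.mem_filter, Finset.mem_univ, true_and] at hT
    obtain ⟨h, rfl⟩ := hT
    rw [Finset.mem_powerset]
    intro y hy
    exact Finset.mem_Iio.2 (lt_of_le_of_ne (T.le_max' y (Finset.mem_of_mem_erase hy))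
        (Finset.ne_of_mem_erase hy))
  · intro S hS
    rw [Finset.mem_powerset] at hS
    exact Finset.erase_insert fun h => lt_irrefl _ (Finset.mem_Iio.1 (hS h))
  · intro T hT
    simp only [Finset.mem_filter, Finset.mem_univ, true_and] at hT
    obtain ⟨h, rfl⟩ := hT
    exact Finset.insert_erase (T.max'_mem h)

/-- For any field `F`, `β ∈ F` and `n ≥ 1`, in the polynomial
`∏_{∅ ≠ T ⊆ [n]} ((∑_{i ∈ T} z_i) - β)` the coefficient of the monomial
`∏_{i=1}^n z_i^{2^{i-1}}` equals `1`. -/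
theorem coeff_of_product_over_nonempty_subsets
    (F : Type*) [Field F] (n : ℕ) (hn : 1 ≤ n) (β : F) :
    MvPolynomial.coeff
      (Finsupp.equivFunOnFinite.symm fun i : Fin n => 2 ^ (i : ℕ))
      (∏ T ∈ Finset.univ.powerset.filter Finset.Nonempty,
        ((∑ i ∈ T, MvPolynomial.X i) - MvPolynomial.C β : MvPolynomial (Fin n) F)) = 1 := by
  classical
  obtain ⟨m, hm⟩ := exists_order_aux n
  have hmonic : ∀ T ∈ (Finset.univ : Finset (Fin n)).powerset.filter Finset.Nonempty,
      m.Monic ((∑ i ∈ T, MvPolynomial.X i) - MvPolynomial.C β : MvPolynomial (Fin n) F) :=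
    fun T hT => (factor_aux m hm β T (Finset.mem_filter.1 hT).2).1
  have key := (MonomialOrder.Monic.prod hmonic).coeff_degree
  rw [MonomialOrder.degree_prod (fun T hT => (hmonic T hT).ne_zero)] at key
  convert key using 2
  ext i
  rw [Finsupp.finsetSum_apply, Finsupp.equivFunOnFinite_symm_apply_apply, ← card_aux i,
    Finset.card_filter]
  symm
  apply Finset.sum_subset_zero_on_sdiff (Finset.subset_univ _)
  · intro T hT
    simp only [Finset.mem_sdiff, Finset.mem_filter, Finset.mem_univ, true_and,
      Finset.mem_powerset, Finset.subset_univ] at hT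
    rw [if_neg]
    rintro ⟨h, -⟩
    exact hT h
  · intro T hT
    have h := (Finset.mem_filter.1 hT).2
    rw [(factor_aux m hm β T h).2, Finsupp.single_apply]
    simp [h]
end

section
/- Let F′ be a field and F a strict subfield of F′, let n ∈ ℕ, fix β ∈ F′ \ F, and let S ⊆ F be a finite nonempty subset. For each α = (α_1,…,α_n) ∈ F^n one has Σ_i α_i a_i − β ≠ 0 for every a ∈ {0,1}^n; let f_α ∈ F′[x_1,…,x_n] denote the unique multilinear polynomial that agrees with the function 1/(Σ_i α_i x_i − β) on the Boolean cube {0,1}^n. Then the number of tuples α ∈ S^n for which the total degree of f_α is strictly less than n is at most (2^n − 1)·|S|^{n−1}. Equivalently, for α drawn uniformly at random from S^n, Pr[deg f_α = n] ≥ 1 − (2^n − 1)/|S|. -/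
lemma drlf_alt_sum {K : Type*} [CommRing K] {n : ℕ} (i : Fin n) (g : Finset (Fin n) → K)
    (hg : ∀ t, i ∉ t → g (insert i t) = g t) :
    ∑ b : Finset (Fin n), (-1 : K) ^ b.card * g b = 0 := by
  classical
  have h : (Finset.univ : Finset (Finset (Fin n))) =
      (insert i ((Finset.univ : Finset (Fin n)).erase i)).powerset := by
    rw [Finset.insert_erase (Finset.mem_univ i), Finset.powerset_univ]
  rw [h, Finset.sum_powerset_insert (Finset.notMem_erase i _), ← Finset.sum_add_distrib]
  apply Finset.sum_eq_zero
  intro t ht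
  have hi : i ∉ t := fun h => by
    have := Finset.mem_powerset.1 ht h
    simp at this
  rw [hg t hi, Finset.card_insert_of_notMem hi]
  ring

lemma drlf_alt_eval {K : Type*} [Field K] {n : ℕ} (p : MvPolynomial (Fin n) K)
    (hp : p.totalDegree < n) :
    ∑ b : Finset (Fin n), (-1 : K) ^ b.card *
      MvPolynomial.eval (fun i => if i ∈ b then (1 : K) else 0) p = 0 := by
  classical
  simp_rw [MvPolynomial.eval_eq, Finset.mul_sum]
  rw [Finset.sum_comm]
  apply Finset.sum_eq_zero
  intro d hd
  have hex : ∃ i, d i = 0 := by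
    by_contra! hne
    have h1 := MvPolynomial.le_totalDegree hd
    have h2 : n ≤ d.sum fun _ e => e := by
      rw [Finsupp.sum_fintype _ _ (fun _ => rfl)]
      calc n = ∑ i : Fin n, 1 := by simp
        _ ≤ _ := Finset.sum_le_sum fun i _ => Nat.one_le_iff_ne_zero.2 (hne i)
    omega
  obtain ⟨i, hi⟩ := hex
  apply drlf_alt_sum i (fun b => MvPolynomial.coeff d p *
    ∏ j ∈ d.support, (if j ∈ b then (1 : K) else 0) ^ d j)
  intro t _
  congr 1
  apply Finset.prod_congr rfl
  intro j hj
  have hji : j ≠ i := by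
    rintro rfl
    simp [hi] at hj
  simp [Finset.mem_insert, hji]

noncomputable def drlfL {K : Type*} [Field K] (n : ℕ) (β : K) (b : Finset (Fin n)) :
    MvPolynomial (Fin n) K :=
  ∑ i ∈ b, MvPolynomial.X i - MvPolynomial.C β

open scoped Classical in
noncomputable def drlfP {K : Type*} [Field K] (n : ℕ) (β : K) : MvPolynomial (Fin n) K :=
  ∑ b : Finset (Fin n), MvPolynomial.C ((-1 : K) ^ b.card) *
    ∏ c ∈ Finset.univ.erase b, drlfL n β c

lemma drlfL_deg {K : Type*} [Field K] (n : ℕ) (β : K) (b : Finset (Fin n)) :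
    (drlfL n β b).totalDegree ≤ 1 := by
  unfold drlfL
  refine (MvPolynomial.totalDegree_sub_C_le _ _).trans ?_
  apply MvPolynomial.totalDegree_finsetSum_le
  intro i _
  simp

lemma drlfP_deg {K : Type*} [Field K] (n : ℕ) (β : K) :
    (drlfP n β).totalDegree ≤ 2 ^ n - 1 := by
  classical
  unfold drlfP
  apply MvPolynomial.totalDegree_finsetSum_le
  intro b _
  refine (MvPolynomial.totalDegree_mul _ _).trans ?_
  rw [MvPolynomial.totalDegree_C, zero_add]
  refine (MvPolynomial.totalDegree_finsetProd _ _).trans ?_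
  refine (Finset.sum_le_sum fun c _ => drlfL_deg n β c).trans ?_
  simp [Finset.card_erase_of_mem]

lemma drlfP_ne {K : Type*} [Field K] (n : ℕ) (hn : 0 < n) (β : K) (hβ : β ≠ 0) :
    drlfP n β ≠ 0 := by
  classical
  let z : Fin n := ⟨0, hn⟩
  let φ : MvPolynomial (Fin n) K →ₐ[K] MvPolynomial (Fin n) K :=
    MvPolynomial.aeval fun i => if i = z then
      MvPolynomial.C β - ∑ j ∈ Finset.univ.erase z, MvPolynomial.X j else MvPolynomial.X i
  have hL : ∀ (b : Finset (Fin n)) (v : Fin n → K), MvPolynomial.eval v (φ (drlfL n β b)) =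
      (∑ i ∈ b, if i = z then β - ∑ j ∈ Finset.univ.erase z, v j else v i) - β := by
    intro b v
    simp only [φ, drlfL, map_sub, map_sum, MvPolynomial.aeval_X, MvPolynomial.aeval_C,
      MvPolynomial.algebraMap_eq, MvPolynomial.eval_C]
    congr 1
    apply Finset.sum_congr rfl
    intro i _
    split_ifs <;> simp
  have huniv : φ (drlfL n β Finset.univ) = 0 := by
    have hs : ∀ g : Fin n → MvPolynomial (Fin n) K,
      ∑ i, g i = g z + ∑ i ∈ Finset.univ.erase z, g i := fun g =>
        (Finset.add_sum_erase _ _ (Finset.mem_univ z)).symm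
    simp only [φ, drlfL, map_sub, map_sum, MvPolynomial.aeval_X, MvPolynomial.aeval_C,
      MvPolynomial.algebraMap_eq]
    rw [hs, if_pos rfl, Finset.sum_congr rfl (fun i hi => if_neg (Finset.ne_of_mem_erase hi))]
    ring
  have hne : ∀ b ≠ Finset.univ, φ (drlfL n β b) ≠ 0 := by
    intro b hb h0
    by_cases hz : z ∈ b
    · obtain ⟨j, hj⟩ : ∃ j, j ∉ b := by
        by_contra! h
        exact hb (Finset.eq_univ_iff_forall.2 h)
      have hjz : j ≠ z := by rintro rfl; exact hj hz
      have h := hL b (Pi.single j 1)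
      rw [h0, map_zero, ← Finset.add_sum_erase _ _ hz, if_pos rfl,
        Finset.sum_eq_zero (s := b.erase z), Finset.sum_eq_single_of_mem j (by simp [hjz])
          (fun i _ hi => Pi.single_eq_of_ne hi _), Pi.single_eq_same] at h
      · simp at h
      · intro i hi
        rw [if_neg (Finset.ne_of_mem_erase hi), Pi.single_eq_of_ne]
        rintro rfl
        exact hj (Finset.mem_of_mem_erase hi)
    · have h := hL b 0
      rw [h0, map_zero, Finset.sum_eq_zero] at h
      · apply hβ; simpa using h.symm
      · intro i hi
        rw [if_neg (by rintro rfl; exact hz hi)]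
        rfl
  intro hP
  have h := congrArg φ hP
  rw [map_zero, drlfP, map_sum, Finset.sum_eq_single Finset.univ] at h
  · rw [map_mul, map_prod] at h
    rcases mul_eq_zero.1 h with h | h
    · simp [φ] at h
    · obtain ⟨c, hc, hc0⟩ := Finset.prod_eq_zero_iff.1 h
      exact hne c (Finset.ne_of_mem_erase hc) hc0
  · intro b _ hb
    rw [map_mul, map_prod, Finset.prod_eq_zero (i := Finset.univ), mul_zero]
    · simpa using hb.symm
    · exact huniv
  · simp

lemma drlfP_eval {K : Type*} [Field K] (n : ℕ) (β : K) (α : Fin n → K)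
    (p : MvPolynomial (Fin n) K) (hp : p.totalDegree < n)
    (h : ∀ a : Fin n → K, (∀ i, a i = 0 ∨ a i = 1) →
      MvPolynomial.eval a p * ((∑ i, α i * a i) - β) = 1) :
    MvPolynomial.eval α (drlfP n β) = 0 := by
  classical
  have hL : ∀ b, MvPolynomial.eval (fun i => if i ∈ b then (1 : K) else 0) p *
      MvPolynomial.eval α (drlfL n β b) = 1 := by
    intro b
    have := h (fun i => if i ∈ b then (1 : K) else 0) (fun i => by by_cases hi : i ∈ b <;> simp [hi])
    simpa [drlfL] using this
  have h2 := drlf_alt_eval p hp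
  rw [drlfP, map_sum]
  have h3 : ∀ b : Finset (Fin n), MvPolynomial.eval α (MvPolynomial.C ((-1 : K) ^ b.card) *
      ∏ c ∈ Finset.univ.erase b, drlfL n β c) =
      ((-1 : K) ^ b.card * MvPolynomial.eval (fun i => if i ∈ b then (1 : K) else 0) p) *
      ∏ c, MvPolynomial.eval α (drlfL n β c) := by
    intro b
    rw [map_mul, map_prod, MvPolynomial.eval_C, ← Finset.mul_prod_erase _ _ (Finset.mem_univ b)]
    linear_combination (-(-1 : K) ^ b.card *
      ∏ c ∈ Finset.univ.erase b, MvPolynomial.eval α (drlfL n β c)) * hL b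
  rw [Finset.sum_congr rfl (fun b _ => h3 b), ← Finset.sum_mul, h2, zero_mul]


open scoped Classical in
/-- Let `F` be a strict subfield of `F'`, `β ∈ F' \ F`, and `S ⊆ F`
a finite nonempty set.  The denominator `∑ i, α i * a i - β` never vanishes on the
Boolean cube, and for the family `f α` of multilinear polynomials agreeing with
`1/(∑ i, α i * x i - β)` on the Boolean cube, the number of `α ∈ S^n` with
`deg (f α) < n` is at most `(2^n - 1) * |S|^(n-1)`. -/
theorem degree_lower_bound_random_linear_form
    (F' : Type*) [Field F'] (F : Subfield F') (hF : F ≠ ⊤)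
    (n : ℕ) (β : F') (hβ : β ∉ F)
    (S : Finset F') (hSF : ∀ s ∈ S, s ∈ F) (hSne : S.Nonempty)
    (f : (Fin n → F') → MvPolynomial (Fin n) F')
    (hml : ∀ α, (∀ i, α i ∈ S) → ∀ i, (f α).degreeOf i ≤ 1)
    (hagree : ∀ α, (∀ i, α i ∈ S) → ∀ a : Fin n → F',
      (∀ i, a i = 0 ∨ a i = 1) →
      MvPolynomial.eval a (f α) * ((∑ i, α i * a i) - β) = 1) :
    (∀ α : Fin n → F', (∀ i, α i ∈ F) → ∀ a : Fin n → F',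
      (∀ i, a i = 0 ∨ a i = 1) → (∑ i, α i * a i) - β ≠ 0) ∧
    ((Fintype.piFinset fun _ : Fin n => S).filter
        fun α => (f α).totalDegree < n).card
      ≤ (2 ^ n - 1) * S.card ^ (n - 1) := by
  constructor
  · intro α hα a ha h
    apply hβ
    rw [← sub_eq_zero.1 h]
    refine F.sum_mem fun i _ => F.mul_mem (hα i) ?_
    rcases ha i with h | h <;> rw [h]
    · exact F.zero_mem
    · exact F.one_mem
  · rcases Nat.eq_zero_or_pos n with rfl | hn
    · simp
    have hβ0 : β ≠ 0 := by rintro rfl; exact hβ F.zero_mem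
    have hsz := MvPolynomial.schwartz_zippel_totalDegree (drlfP_ne n hn β hβ0) S
    have hS : (0 : ℚ≥0) < S.card := by exact_mod_cast hSne.card_pos
    have hsub : ((Fintype.piFinset fun _ : Fin n => S).filter
        fun α => (f α).totalDegree < n).card ≤
        ((Fintype.piFinset fun _ : Fin n => S).filter
        fun α => MvPolynomial.eval α (drlfP n β) = 0).card := by
      apply Finset.card_le_card
      intro α hα
      rw [Finset.mem_filter] at hα ⊢
      exact ⟨hα.1, drlfP_eval n β α (f α) hα.2 (hagree α (Fintype.mem_piFinset.1 hα.1))⟩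
    refine hsub.trans ?_
    have hd := drlfP_deg n β
    obtain ⟨m, rfl⟩ : ∃ m, n = m + 1 := ⟨n - 1, by omega⟩
    rw [div_le_div_iff₀ (by positivity) hS] at hsz
    have h4 : ((Fintype.piFinset fun _ : Fin (m+1) => S).filter
        fun α => MvPolynomial.eval α (drlfP (m+1) β) = 0).card * S.card ≤
        (drlfP (m+1) β).totalDegree * S.card ^ (m+1) := by
      exact_mod_cast hsz
    rw [pow_succ, ← mul_assoc] at h4
    exact (Nat.le_of_mul_le_mul_right h4 hSne.card_pos).trans (Nat.mul_le_mul_right _ hd)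
end

section
/- Let F′ be a field and F a strict subfield of F′, let n ∈ ℕ, fix β ∈ F′ \ F, and let S ⊆ F be a finite nonempty subset. For each α ∈ F^n and each nonempty U ⊆ {1,…,n}, let f_{α,U} ∈ F′[x_1,…,x_n] denote the unique multilinear polynomial that agrees with 1/(Σ_{i∈U} α_i x_i − β) on the Boolean cube {0,1}^n. Then the number of α ∈ S^n for which there exists a nonempty U ⊆ {1,…,n} with deg f_{α,U} < |U| is at most Σ_{∅≠U⊆{1,…,n}} (2^{|U|} − 1)·|S|^{n−1}, which is strictly less than 2^{2n}·|S|^{n−1}. In particular, if |S| > 2^{2n} then there exists α ∈ S^n such that for every nonempty U ⊆ {1,…,n} the coefficient of the monomial ∏_{i∈U} x_i in f_{α,U} is nonzero. -/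
open MvPolynomial in
/-- the linear form of a subset -/
noncomputable def lf {K : Type*} [Field K] {n : ℕ} (β : K) (T : Finset (Fin n)) :
    MvPolynomial (Fin n) K := (∑ i ∈ T, X i) - C β

open MvPolynomial in
/-- numerator of the top coefficient -/
noncomputable def qp {K : Type*} [Field K] {n : ℕ} (β : K) (U : Finset (Fin n)) :
    MvPolynomial (Fin n) K :=
  ∑ T ∈ U.powerset, C ((-1) ^ (U \ T).card) * ∏ T' ∈ U.powerset.erase T, lf β T'

/-- indicator vector -/
def ind (K : Type*) [Field K] {n : ℕ} (T : Finset (Fin n)) : Fin n → K :=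
  fun i => if i ∈ T then 1 else 0

open MvPolynomial in
theorem coeff_formula {K : Type*} [Field K] {n : ℕ} (p : MvPolynomial (Fin n) K)
    (hp : ∀ i, p.degreeOf i ≤ 1) (U : Finset (Fin n)) :
    p.coeff (∑ i ∈ U, Finsupp.single i 1) =
      ∑ T ∈ U.powerset, (-1) ^ (U \ T).card * eval (ind K T) p := by
  have key : ∀ m : Fin n →₀ ℕ,
      ∑ T ∈ U.powerset, (-1 : K) ^ (U \ T).card * ∏ i, ind K T i ^ m i =
        (∏ i ∈ U, (1 + -(0 : K) ^ m i)) * ∏ i ∈ Uᶜ, (0 : K) ^ m i := by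
    intro m
    rw [Finset.prod_add, Finset.sum_mul]
    refine Finset.sum_congr rfl fun T hT => ?_
    have hTU := Finset.mem_powerset.1 hT
    rw [← Finset.prod_mul_prod_compl U, ← Finset.prod_sdiff hTU, Finset.prod_neg]
    have h1 : ∏ i ∈ U \ T, ind K T i ^ m i = ∏ i ∈ U \ T, (0 : K) ^ m i := by
      refine Finset.prod_congr rfl fun i hi => ?_
      simp [ind, (Finset.mem_sdiff.1 hi).2]
    have h2 : ∏ i ∈ T, ind K T i ^ m i = 1 := by
      refine Finset.prod_eq_one fun i hi => ?_
      simp [ind, hi]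
    have h3 : ∏ i ∈ Uᶜ, ind K T i ^ m i = ∏ i ∈ Uᶜ, (0 : K) ^ m i := by
      refine Finset.prod_congr rfl fun i hi => ?_
      have : i ∉ T := fun h => (Finset.mem_compl.1 hi) (hTU h)
      simp [ind, this]
    rw [h1, h2, h3]
    simp
    ring
  have hsum : ∀ i, (∑ j ∈ U, Finsupp.single j 1 : Fin n →₀ ℕ) i = if i ∈ U then 1 else 0 := by
    intro i
    simp [Finsupp.finset_sum_apply, Finsupp.single_apply]
  simp_rw [eval_eq', Finset.mul_sum]
  rw [Finset.sum_comm]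
  have : ∀ m ∈ p.support, ∑ T ∈ U.powerset, (-1 : K) ^ (U \ T).card *
      (coeff m p * ∏ i, ind K T i ^ m i) =
      if m = ∑ i ∈ U, Finsupp.single i 1 then coeff m p else 0 := by
    intro m hm
    have e : ∀ T : Finset (Fin n), (-1 : K) ^ (U \ T).card *
      (coeff m p * ∏ i, ind K T i ^ m i) = coeff m p * ((-1 : K) ^ (U \ T).card *
       ∏ i, ind K T i ^ m i) := fun T => by ring
    simp_rw [e]
    rw [← Finset.mul_sum, key]
    split_ifs with h
    · rw [Finset.prod_eq_one, Finset.prod_eq_one]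
      · simp
      · intro i hi
        rw [h, hsum, if_neg (Finset.mem_compl.1 hi)]; simp
      · intro i hi
        rw [h, hsum, if_pos hi]; simp
    · have : ∃ i, m i ≠ if i ∈ U then 1 else 0 := by
        by_contra! hc
        exact h (Finsupp.ext fun i => by rw [hc, hsum])
      obtain ⟨i, hi⟩ := this
      have hle : m i ≤ 1 := (monomial_le_degreeOf i hm).trans (hp i)
      by_cases hiU : i ∈ U
      · rw [if_pos hiU] at hi
        have h0 : m i = 0 := by omega
        rw [Finset.prod_eq_zero hiU (by simp [h0])]; simp
      · rw [if_neg hiU] at hi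
        rw [Finset.prod_eq_zero (s := Uᶜ) (Finset.mem_compl.2 hiU) (by simp [hi])]; simp
  rw [Finset.sum_congr rfl this, Finset.sum_ite_eq']
  split_ifs with h
  · rfl
  · simpa using h

open MvPolynomial in
theorem qp_eval {K : Type*} [Field K] {n : ℕ} (β : K) (U : Finset (Fin n))
    (α : Fin n → K) (p : MvPolynomial (Fin n) K)
    (hp : ∀ i, p.degreeOf i ≤ 1)
    (h : ∀ a : Fin n → K, (∀ i, a i = 0 ∨ a i = 1) →
      eval a p * ((∑ i ∈ U, α i * a i) - β) = 1)
    (h0 : p.coeff (∑ i ∈ U, Finsupp.single i 1) = 0) : eval α (qp β U) = 0 := by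
  have : eval α (qp β U) = p.coeff (∑ i ∈ U, Finsupp.single i 1) *
      ∏ T ∈ U.powerset, eval α (lf β T) := by
    rw [coeff_formula p hp, Finset.sum_mul, qp, map_sum]
    refine Finset.sum_congr rfl fun T hT => ?_
    have hTU := Finset.mem_powerset.1 hT
    rw [← Finset.mul_prod_erase _ _ hT, map_mul, eval_C, map_prod]
    have h1 := h (ind K T) (fun i => by unfold ind; split_ifs <;> simp)
    have h2 : ∑ i ∈ U, α i * ind K T i = ∑ i ∈ T, α i := by
      simp [ind, Finset.sum_ite_mem, Finset.inter_eq_right.2 hTU]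
    have h3 : eval α (lf β T) = ∑ i ∈ T, α i - β := by simp [lf]
    rw [h2, ← h3] at h1
    linear_combination (-(-1 : K) ^ (U \ T).card *
      ∏ x ∈ U.powerset.erase T, eval α (lf β x)) * h1
  rw [this, h0, zero_mul]

open MvPolynomial in
theorem qp_ne_zero {K : Type*} [Field K] {n : ℕ} (β : K) (hβ : β ≠ 0) (U : Finset (Fin n))
    (hU : U.Nonempty) : qp β U ≠ 0 := by
  obtain ⟨k, hk⟩ := hU
  intro h
  let g : Fin n → MvPolynomial (Fin n) K :=
    fun i => if i = k then C β - ∑ j ∈ U.erase k, X j else X i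
  have gX : ∀ T : Finset (Fin n), k ∉ T → ∑ i ∈ T, g i = ∑ i ∈ T, X i := by
    intro T hT
    refine Finset.sum_congr rfl fun i hi => ?_
    have : i ≠ k := fun e => hT (e ▸ hi)
    simp [g, this]
  have hl : ∀ T, aeval g (lf β T) = (∑ i ∈ T, g i) - C β := by
    intro T; simp [lf, algebraMap_eq]
  have gk : g k = C β - ∑ j ∈ U.erase k, X j := by simp [g]
  have hlU : aeval g (lf β U) = 0 := by
    rw [hl, ← Finset.add_sum_erase _ _ hk, gX _ (Finset.notMem_erase _ _), gk]; ring
  have hlT : ∀ T ∈ U.powerset.erase U, aeval g (lf β T) ≠ 0 := by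
    intro T hT h0
    obtain ⟨hne, hT⟩ := Finset.mem_erase.1 hT
    have hTU := Finset.mem_powerset.1 hT
    rw [hl] at h0
    by_cases hkT : k ∈ T
    · obtain ⟨j, hjU, hjT⟩ := Finset.exists_of_ssubset (Finset.ssubset_iff_subset_ne.2 ⟨hTU, hne⟩)
      have hjk : j ≠ k := fun e => hjT (e ▸ hkT)
      rw [← Finset.add_sum_erase _ _ hkT, gX _ (Finset.notMem_erase _ _), gk] at h0
      have := congrArg (eval (Pi.single j (1 : K))) h0
      simp [Pi.single_apply, hjU, hjT, hjk] at this
    · rw [gX _ hkT] at h0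
      have := congrArg (eval (0 : Fin n → K)) h0
      simp at this
      exact hβ this
  have h2 := congrArg (aeval g) h
  rw [qp, map_sum, Finset.sum_eq_single_of_mem U (Finset.mem_powerset_self U)] at h2
  · simp only [Finset.sdiff_self, Finset.card_empty, pow_zero, map_one, one_mul, map_prod,
      map_zero] at h2
    exact Finset.prod_ne_zero_iff.2 hlT h2
  · intro T hT hne
    rw [map_mul, map_prod, Finset.prod_eq_zero (i := U) _ hlU, mul_zero]
    exact Finset.mem_erase.2 ⟨hne.symm, Finset.mem_powerset_self U⟩

open MvPolynomial in
theorem qp_deg {K : Type*} [Field K] {n : ℕ} (β : K) (U : Finset (Fin n)) :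
    (qp β U).totalDegree ≤ 2 ^ U.card - 1 := by
  refine totalDegree_finsetSum_le fun T hT => ?_
  refine (totalDegree_mul _ _).trans ?_
  rw [totalDegree_C, zero_add]
  refine (totalDegree_finset_prod _ _).trans ?_
  have : ∀ T' ∈ U.powerset.erase T, (lf β T').totalDegree ≤ 1 := by
    intro T' _
    refine (totalDegree_sub_C_le _ _).trans ?_
    exact totalDegree_finsetSum_le fun i _ => by rw [totalDegree_X]
  refine (Finset.sum_le_card_nsmul _ _ _ this).trans ?_
  rw [Finset.card_erase_of_mem hT, Finset.card_powerset]; simp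

open MvPolynomial in
theorem qp_zeros {K : Type*} [Field K] [DecidableEq K] {n : ℕ} (β : K) (hβ : β ≠ 0)
    (U : Finset (Fin n)) (hU : U.Nonempty) (S : Finset K) (hS : S.Nonempty) :
    ((Fintype.piFinset fun _ : Fin n => S).filter (fun α => eval α (qp β U) = 0)).card
      ≤ (2 ^ U.card - 1) * S.card ^ (n - 1) := by
  have h := schwartz_zippel_totalDegree (qp_ne_zero β hβ U hU) S
  have hc : (0 : ℚ≥0) < S.card := by exact_mod_cast hS.card_pos
  have hn : n ≠ 0 := by rintro rfl; obtain ⟨k, -⟩ := hU; exact k.elim0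
  obtain ⟨m, rfl⟩ := Nat.exists_eq_succ_of_ne_zero hn
  rw [div_le_div_iff₀ (by positivity) hc, pow_succ, ← mul_assoc] at h
  have h' := le_of_mul_le_mul_right h hc
  have h'' : ((Fintype.piFinset fun _ : Fin (m+1) => S).filter
    (fun α => eval α (qp β U) = 0)).card ≤ (qp β U).totalDegree * S.card ^ m := by
    exact_mod_cast h'
  exact h''.trans (Nat.mul_le_mul_right _ (qp_deg β U))


open scoped Classical in
/-- Let `F` be a strict subfield of `F'`, `β ∈ F' \ F`, `S ⊆ F` finite
nonempty.  For `α ∈ F^n` and nonempty `U ⊆ [n]`, `f α U` is the multilinear polynomial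
agreeing with `1/(∑_{i ∈ U} α i * x i - β)` on the Boolean cube.  The number of
`α ∈ S^n` for which some nonempty `U` gives `deg (f α U) < |U|` is at most
`(∑_{∅≠U} (2^{|U|} - 1)) * |S|^(n-1) < 2^{2n} * |S|^(n-1)`; in particular if
`|S| > 2^{2n}` there is an `α ∈ S^n` such that for all nonempty `U` the coefficient of
`∏_{i ∈ U} x i` in `f α U` is nonzero. -/
theorem degree_lower_bound_all_restrictions
    (F' : Type*) [Field F'] (F : Subfield F') (hF : F ≠ ⊤)
    (n : ℕ) (β : F') (hβ : β ∉ F)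
    (S : Finset F') (hSF : ∀ s ∈ S, s ∈ F) (hSne : S.Nonempty)
    (f : (Fin n → F') → Finset (Fin n) → MvPolynomial (Fin n) F')
    (hml : ∀ α, (∀ i, α i ∈ S) → ∀ U : Finset (Fin n), U.Nonempty →
      ∀ i, (f α U).degreeOf i ≤ 1)
    (hagree : ∀ α, (∀ i, α i ∈ S) → ∀ U : Finset (Fin n), U.Nonempty →
      ∀ a : Fin n → F', (∀ i, a i = 0 ∨ a i = 1) →
      MvPolynomial.eval a (f α U) * ((∑ i ∈ U, α i * a i) - β) = 1) :
    ((Fintype.piFinset fun _ : Fin n => S).filter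
        (fun α => ∃ U : Finset (Fin n), U.Nonempty ∧ (f α U).totalDegree < U.card)).card
      ≤ (∑ U ∈ (Finset.univ.powerset.filter Finset.Nonempty : Finset (Finset (Fin n))),
          (2 ^ U.card - 1)) * S.card ^ (n - 1) ∧
    (∑ U ∈ (Finset.univ.powerset.filter Finset.Nonempty : Finset (Finset (Fin n))),
        (2 ^ U.card - 1)) * S.card ^ (n - 1)
      < 2 ^ (2 * n) * S.card ^ (n - 1) ∧
    (2 ^ (2 * n) < S.card →
      ∃ α : Fin n → F', (∀ i, α i ∈ S) ∧ ∀ U : Finset (Fin n), U.Nonempty →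
        (f α U).coeff (∑ i ∈ U, Finsupp.single i 1) ≠ 0) := by
  have hβ0 : β ≠ 0 := fun h => hβ (h ▸ F.zero_mem)
  have hB : ((Fintype.piFinset fun _ : Fin n => S).filter
        (fun α => ∃ U : Finset (Fin n), U.Nonempty ∧
          (f α U).coeff (∑ i ∈ U, Finsupp.single i 1) = 0)).card
      ≤ (∑ U ∈ (Finset.univ.powerset.filter Finset.Nonempty : Finset (Finset (Fin n))),
          (2 ^ U.card - 1)) * S.card ^ (n - 1) := by
    rw [Finset.sum_mul]
    refine le_trans (Finset.card_le_card (t := (Finset.univ.powerset.filter Finset.Nonempty :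
      Finset (Finset (Fin n))).biUnion fun U => (Fintype.piFinset fun _ : Fin n => S).filter
        (fun α => MvPolynomial.eval α (qp β U) = 0)) ?_) (Finset.card_biUnion_le.trans ?_)
    · intro α hα
      obtain ⟨hα, U, hU, h0⟩ := Finset.mem_filter.1 hα
      have hα' := Fintype.mem_piFinset.1 hα
      refine Finset.mem_biUnion.2 ⟨U, by simpa using hU, Finset.mem_filter.2 ⟨hα, ?_⟩⟩
      exact qp_eval β U α (f α U) (hml α hα' U hU) (hagree α hα' U hU) h0
    · refine Finset.sum_le_sum fun U hU => ?_
      exact qp_zeros β hβ0 U (Finset.mem_filter.1 hU).2 S hSne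
  have hlt : (∑ U ∈ (Finset.univ.powerset.filter Finset.Nonempty : Finset (Finset (Fin n))),
        (2 ^ U.card - 1)) * S.card ^ (n - 1)
      < 2 ^ (2 * n) * S.card ^ (n - 1) := by
    refine Nat.mul_lt_mul_of_pos_right ?_ (pow_pos hSne.card_pos _)
    have h1 : ∀ U ∈ (Finset.univ.powerset.filter Finset.Nonempty : Finset (Finset (Fin n))),
        2 ^ U.card - 1 ≤ 2 ^ n - 1 := fun U _ =>
      Nat.sub_le_sub_right (Nat.pow_le_pow_right (by norm_num)
        (by simpa using Finset.card_le_univ U)) 1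
    have h2 := Finset.sum_le_card_nsmul _ _ _ h1
    have h3 : (Finset.univ.powerset.filter Finset.Nonempty : Finset (Finset (Fin n))).card
        ≤ 2 ^ n := (Finset.card_filter_le _ _).trans (by simp)
    have h4 : 0 < 2 ^ n := by positivity
    rw [smul_eq_mul] at h2
    refine (h2.trans (Nat.mul_le_mul_right _ h3)).trans_lt ?_
    rw [two_mul, pow_add]
    exact Nat.mul_lt_mul_of_pos_left (by omega) h4
  refine ⟨le_trans (Finset.card_le_card ?_) hB, hlt, fun hS => ?_⟩
  · intro α hα
    obtain ⟨hα, U, hU, h0⟩ := Finset.mem_filter.1 hα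
    refine Finset.mem_filter.2 ⟨hα, U, hU, ?_⟩
    by_contra hc
    have h1 := MvPolynomial.le_totalDegree (MvPolynomial.mem_support_iff.2 hc)
    have h2 : ((∑ i ∈ U, Finsupp.single i 1 : Fin n →₀ ℕ).sum fun _ e => e) = U.card := by
      rw [Finsupp.sum_fintype _ _ (fun _ => rfl)]
      simp [Finsupp.finset_sum_apply, Finsupp.single_apply]
    omega
  · by_contra! hc
    have hle : 2 ^ (2 * n) * S.card ^ (n - 1) ≤ S.card ^ n := by
      rcases n with _ | m
      · simp
      · rw [pow_succ' S.card m]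
        exact Nat.mul_le_mul_right _ hS.le
    rw [Finset.filter_true_of_mem] at hB
    · rw [Fintype.card_piFinset_const] at hB
      omega
    · intro α hα
      obtain ⟨U, hU, h⟩ := hc α (Fintype.mem_piFinset.1 hα)
      exact ⟨U, hU, h⟩
end

section
/- Let F′ be a field and F a strict subfield of F′, let n ∈ ℕ, fix β ∈ F′ \ F, and let S ⊆ F be a finite nonempty subset. For α ∈ F^n let f_α ∈ F′[x_1,…,x_n,y_1,…,y_n] be the unique multilinear polynomial that agrees with 1/(Σ_{i=1}^n α_i x_i y_i − β) on the Boolean cube {0,1}^{2n}. For b ∈ {0,1}^n let f_α(x,b) ∈ F′[x_1,…,x_n] denote the polynomial obtained from f_α by substituting y_i := b_i for all i. Then the number of α ∈ S^n for which the F′-linear span of { f_α(x,b) : b ∈ {0,1}^n } has dimension strictly less than 2^n is at most 2^{2n}·|S|^{n−1}. -/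
namespace EvalDim

open Polynomial

variable {K : Type*} [Field K]

def sm {n : ℕ} (α : Fin n → K) (a b : Fin n → Bool) : K :=
  ∑ i, α i * (if a i then (1 : K) else 0) * (if b i then (1 : K) else 0)

def Good {n : ℕ} (β : K) (α : Fin n → K) : Prop :=
  ∀ v : (Fin n → Bool) → K, (∀ a, ∑ b, (sm α a b - β)⁻¹ * v b = 0) → v = 0

lemma sm_mem {n : ℕ} (F : Subfield K) (α : Fin n → K) (h : ∀ i, α i ∈ F) (a b : Fin n → Bool) :
    sm α a b ∈ F := by
  unfold sm
  refine sum_mem fun i _ => mul_mem (mul_mem (h i) ?_) ?_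
  · split_ifs
    · exact one_mem F
    · exact zero_mem F
  · split_ifs
    · exact one_mem F
    · exact zero_mem F

lemma sm_cons {n : ℕ} (t : K) (α : Fin n → K) (x y : Bool) (a b : Fin n → Bool) :
    sm (Fin.cons t α : Fin (n + 1) → K) (Fin.cons x a : Fin (n + 1) → Bool)
      (Fin.cons y b : Fin (n + 1) → Bool) =
      (if x && y then t else 0) + sm α a b := by
  unfold sm
  rw [Fin.sum_univ_succ]
  cases x <;> cases y <;> simp

lemma sum_cons {n : ℕ} (g : (Fin (n + 1) → Bool) → K) :
    ∑ b, g b = ∑ b : Fin n → Bool, g (Fin.cons false b : Fin (n + 1) → Bool)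
      + ∑ b : Fin n → Bool, g (Fin.cons true b : Fin (n + 1) → Bool) := by
  rw [← (Fin.consEquiv (fun _ : Fin (n + 1) => Bool)).sum_comp, Fintype.sum_prod_type]
  simp [Fin.consEquiv, add_comm]

/-- cleared matrix, a polynomial in `u = 1/t` -/
noncomputable def E {n : ℕ} (β : K) (α : Fin n → K) :
    Matrix (Fin n → Bool) (Fin n → Bool) K[X] := fun a b =>
  X * ∏ b' ∈ Finset.univ.erase b, (1 + C (sm α a b' - β) * X)
    - C ((sm α a b - β)⁻¹) * ∏ b', (1 + C (sm α a b' - β) * X)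

lemma lin_deg (c : K) : (1 + C c * X : K[X]).natDegree ≤ 1 := by
  compute_degree

lemma E_deg {n : ℕ} (β : K) (α : Fin n → K) (a b : Fin n → Bool) :
    (E β α a b).natDegree ≤ 2 ^ n := by
  have hp : ∀ s : Finset (Fin n → Bool),
      (∏ b' ∈ s, (1 + C (sm α a b' - β) * X : K[X])).natDegree ≤ s.card := by
    intro s
    refine (natDegree_prod_le _ _).trans ?_
    refine (Finset.sum_le_card_nsmul _ _ 1 fun i _ => lin_deg _).trans ?_
    simp
  unfold E
  refine (natDegree_sub_le _ _).trans (max_le ?_ ?_)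
  · refine natDegree_mul_le.trans ?_
    have h1 := hp (Finset.univ.erase b)
    rw [Finset.card_erase_of_mem (Finset.mem_univ _)] at h1
    have h2 : (Finset.univ : Finset (Fin n → Bool)).card = 2 ^ n := by simp
    have h3 : 0 < 2 ^ n := by positivity
    rw [natDegree_X]
    omega
  · refine (natDegree_C_mul_le _ _).trans ?_
    refine (hp _).trans ?_
    simp

lemma det_deg {n : ℕ} (β : K) (α : Fin n → K) : (E β α).det.natDegree ≤ 4 ^ n := by
  rw [Matrix.det_apply]
  refine natDegree_sum_le_of_forall_le _ _ fun σ _ => ?_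
  refine (natDegree_smul_le _ _).trans ?_
  refine (natDegree_prod_le _ _).trans ?_
  refine (Finset.sum_le_card_nsmul _ _ (2 ^ n) fun i _ => E_deg _ _ _ _).trans ?_
  simp [← mul_pow]

lemma good_det {n : ℕ} {β : K} {α : Fin n → K} (h : Good β α) :
    (Matrix.of fun a b => (sm α a b - β)⁻¹).det ≠ 0 := by
  intro h0
  obtain ⟨v, hv, h1⟩ := Matrix.exists_mulVec_eq_zero_iff.mpr h0
  refine hv (h v fun a => ?_)
  simpa [Matrix.mulVec, dotProduct] using congrFun h1 a

lemma det_ne {n : ℕ} {β : K} {α : Fin n → K} (h : Good β α) : (E β α).det ≠ 0 := by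
  intro h0
  have h1 : (evalRingHom (0 : K)) (E β α).det = 0 := by rw [h0]; simp
  rw [RingHom.map_det] at h1
  have h2 : (evalRingHom (0 : K)).mapMatrix (E β α)
      = - (Matrix.of fun a b => (sm α a b - β)⁻¹) := by
    ext a b
    simp [E, eval_prod]
  rw [h2, Matrix.det_neg] at h1
  have := good_det h
  simp_all

lemma good_cons {n : ℕ} (F : Subfield K) {β : K} (hβ : β ∉ F) {α : Fin n → K}
    (hα : ∀ i, α i ∈ F) (h : Good β α) {t : K} (htF : t ∈ F) (ht : t ≠ 0)
    (hd : (E β α).det.eval t⁻¹ ≠ 0) : Good β (Fin.cons t α : Fin (n + 1) → K) := by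
  intro v hv
  set v0 : (Fin n → Bool) → K := fun b => v (Fin.cons false b : Fin (n + 1) → Bool) with hv0
  set v1 : (Fin n → Bool) → K := fun b => v (Fin.cons true b : Fin (n + 1) → Bool) with hv1
  have r0 : ∀ a, ∑ b, (sm α a b - β)⁻¹ * v0 b + ∑ b, (sm α a b - β)⁻¹ * v1 b = 0 := by
    intro a
    have := hv (Fin.cons false a : Fin (n + 1) → Bool)
    rw [sum_cons] at this
    simpa [sm_cons] using this
  have r1 : ∀ a, ∑ b, (sm α a b - β)⁻¹ * v0 b + ∑ b, (t + sm α a b - β)⁻¹ * v1 b = 0 := by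
    intro a
    have := hv (Fin.cons true a : Fin (n + 1) → Bool)
    rw [sum_cons] at this
    simpa [sm_cons] using this
  have h01 : v0 + v1 = 0 := by
    apply h
    intro a
    rw [← r0 a, ← Finset.sum_add_distrib]
    exact Finset.sum_congr rfl fun b _ => by simp [mul_add]
  have r2 : ∀ a, ∑ b, ((t + sm α a b - β)⁻¹ - (sm α a b - β)⁻¹) * v1 b = 0 := by
    intro a
    have := congrArg₂ (· - ·) (r1 a) (r0 a)
    simp only [sub_mul, Finset.sum_sub_distrib]
    simpa using this
  have hz : v1 = 0 := by
    refine Matrix.eq_zero_of_mulVec_eq_zero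
      (M := (evalRingHom t⁻¹).mapMatrix (E β α)) ?_ ?_
    · rw [← RingHom.map_det]; exact hd
    · ext a
      simp only [Matrix.mulVec, dotProduct, Pi.zero_apply]
      rw [← mul_zero (∏ b', (1 + (sm α a b' - β) * t⁻¹)), ← r2 a, Finset.mul_sum]
      refine Finset.sum_congr rfl fun b _ => ?_
      rw [← mul_assoc]
      congr 1
      have hne : t + sm α a b - β ≠ 0 := by
        intro h0
        apply hβ
        rw [← sub_eq_zero.mp h0]
        exact add_mem htF (sm_mem F α hα a b)
      have hP := Finset.mul_prod_erase Finset.univ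
        (fun b' => (1 + (sm α a b' - β) * t⁻¹)) (Finset.mem_univ b)
      simp only [E, RingHom.mapMatrix_apply, Matrix.map_apply, coe_evalRingHom, eval_sub,
        eval_mul, eval_X, eval_C, eval_prod, eval_add, eval_one]
      have hk : (1 + (sm α a b - β) * t⁻¹) * (t + sm α a b - β)⁻¹ = t⁻¹ := by
        field_simp
        ring
      rw [mul_sub, mul_comm (sm α a b - β)⁻¹]
      congr 1
      rw [← hP, mul_right_comm, hk]
  have hz0 : v0 = 0 := by simpa [hz] using h01
  ext b
  rw [← Fin.cons_self_tail b]
  cases b 0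
  · exact congrFun hz0 (Fin.tail b)
  · exact congrFun hz (Fin.tail b)

open scoped Classical in
lemma count_t {n : ℕ} (F : Subfield K) {β : K} (hβ : β ∉ F) {α : Fin n → K}
    (hα : ∀ i, α i ∈ F) (h : Good β α) (S : Finset K) (hS : ∀ s ∈ S, s ∈ F) :
    (S.filter fun t => ¬ Good β (Fin.cons t α : Fin (n + 1) → K)).card ≤ 4 ^ n + 1 := by
  have hsub : (S.filter fun t => ¬ Good β (Fin.cons t α : Fin (n + 1) → K)) ⊆
      insert 0 ((E β α).det.roots.toFinset.image (·⁻¹)) := by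
    intro t ht
    rw [Finset.mem_filter] at ht
    by_cases h0 : t = 0
    · simp [h0]
    · refine Finset.mem_insert_of_mem (Finset.mem_image.mpr ⟨t⁻¹, ?_, by simp⟩)
      rw [Multiset.mem_toFinset, mem_roots (det_ne h)]
      by_contra hd
      exact ht.2 (good_cons F hβ hα h (hS t ht.1) h0 hd)
  refine (Finset.card_le_card hsub).trans ((Finset.card_insert_le _ _).trans ?_)
  have := (Multiset.toFinset_card_le (E β α).det.roots).trans
    ((card_roots' _).trans (det_deg β α))
  have := (Finset.card_image_le (s := (E β α).det.roots.toFinset) (f := (·⁻¹))).trans this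
  omega

open scoped Classical in
lemma count_bad (F : Subfield K) {β : K} (hβ : β ∉ F) (S : Finset K) (hS : ∀ s ∈ S, s ∈ F)
    (n : ℕ) :
    ((Fintype.piFinset fun _ : Fin n => S).filter fun α => ¬ Good β α).card * S.card
      ≤ 4 ^ n * S.card ^ n := by
  induction n with
  | zero =>
    have : ((Fintype.piFinset fun _ : Fin 0 => S).filter fun α => ¬ Good β α) = ∅ := by
      refine Finset.filter_eq_empty_iff.mpr fun α _ => ?_
      rw [not_not]
      intro v hv
      ext b
      have := hv b
      have hb : β ≠ 0 := fun h => hβ (h ▸ zero_mem F)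
      simp [sm, hb] at this
      exact (congrArg v (Subsingleton.elim b _)).trans this
    rw [this]
    simp
  | succ n ih =>
    set P := Fintype.piFinset fun _ : Fin n => S with hP
    set B := P.filter fun α => ¬ Good β α with hB
    have hsub : ((Fintype.piFinset fun _ : Fin (n + 1) => S).filter fun α => ¬ Good β α) ⊆
        (S ×ˢ B).image (fun p => (Fin.cons p.1 p.2 : Fin (n + 1) → K)) ∪
        (P.filter fun α => Good β α).biUnion (fun α =>
          (S.filter fun t => ¬ Good β (Fin.cons t α : Fin (n + 1) → K)).image
            (fun t => (Fin.cons t α : Fin (n + 1) → K))) := by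
      intro γ hγ
      rw [Finset.mem_filter, Fintype.mem_piFinset] at hγ
      obtain ⟨hγS, hγb⟩ := hγ
      have hc : (Fin.cons (γ 0) (Fin.tail γ) : Fin (n + 1) → K) = γ := Fin.cons_self_tail γ
      have ht : Fin.tail γ ∈ P := Fintype.mem_piFinset.mpr fun i => hγS i.succ
      rw [Finset.mem_union]
      by_cases hg : Good β (Fin.tail γ)
      · right
        refine Finset.mem_biUnion.mpr ⟨Fin.tail γ, Finset.mem_filter.mpr ⟨ht, hg⟩, ?_⟩
        refine Finset.mem_image.mpr ⟨γ 0, Finset.mem_filter.mpr ⟨hγS 0, ?_⟩, hc⟩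
        rw [hc]; exact hγb
      · left
        exact Finset.mem_image.mpr ⟨(γ 0, Fin.tail γ), Finset.mem_product.mpr
          ⟨hγS 0, Finset.mem_filter.mpr ⟨ht, hg⟩⟩, hc⟩
    have h1 := (Finset.card_le_card hsub).trans (Finset.card_union_le _ _)
    have h2 : ((S ×ˢ B).image (fun p => (Fin.cons p.1 p.2 : Fin (n + 1) → K))).card
        ≤ B.card * S.card := by
      refine Finset.card_image_le.trans ?_
      rw [Finset.card_product, mul_comm]
    have h3 : ((P.filter fun α => Good β α).biUnion (fun α =>
          (S.filter fun t => ¬ Good β (Fin.cons t α : Fin (n + 1) → K)).image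
            (fun t => (Fin.cons t α : Fin (n + 1) → K)))).card ≤ S.card ^ n * (4 ^ n + 1) := by
      refine (Finset.card_biUnion_le_card_mul _ _ (4 ^ n + 1) fun α hα => ?_).trans ?_
      · rw [Finset.mem_filter, Fintype.mem_piFinset] at hα
        exact Finset.card_image_le.trans
          (count_t F hβ (fun i => hS _ (hα.1 i)) hα.2 S hS)
      · refine Nat.mul_le_mul_right _ ((Finset.card_filter_le _ _).trans ?_)
        simp [hP]
    have h4 : 1 ≤ 4 ^ n := Nat.one_le_pow _ _ (by norm_num)
    calc _ ≤ (4 ^ n * S.card ^ n + S.card ^ n * (4 ^ n + 1)) * S.card :=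
          Nat.mul_le_mul_right _ (by omega)
      _ ≤ (4 ^ n * S.card ^ n + S.card ^ n * (4 ^ n + 4 ^ n)) * S.card := by gcongr
      _ ≤ (4 ^ n * S.card ^ n + S.card ^ n * (4 ^ n + 4 ^ n)) * S.card
            + 4 ^ n * S.card ^ n * S.card := Nat.le_add_right _ _
      _ = _ := by ring

end EvalDim

open scoped Classical in
/-- Let `F` be a strict subfield of `F'`, `β ∈ F' \ F`, `S ⊆ F` finite
nonempty.  For `α ∈ S^n`, let `f α` be the multilinear polynomial in variables
`x_1,…,x_n,y_1,…,y_n` agreeing with `1/(∑ i, α i * x i * y i - β)` on the Boolean cube.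
The number of `α ∈ S^n` for which the span of the evaluations
`{ f α (x, b) : b ∈ {0,1}^n }` has dimension `< 2^n` is at most `2^{2n} * |S|^{n-1}`. -/
theorem evaluation_dimension_lower_bound_fixed_order
    (F' : Type*) [Field F'] (F : Subfield F') (hF : F ≠ ⊤)
    (n : ℕ) (β : F') (hβ : β ∉ F)
    (S : Finset F') (hSF : ∀ s ∈ S, s ∈ F) (hSne : S.Nonempty)
    (f : (Fin n → F') → MvPolynomial (Fin n ⊕ Fin n) F')
    (hml : ∀ α, (∀ i, α i ∈ S) → ∀ v, (f α).degreeOf v ≤ 1)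
    (hagree : ∀ α, (∀ i, α i ∈ S) → ∀ a b : Fin n → F',
      (∀ i, a i = 0 ∨ a i = 1) → (∀ i, b i = 0 ∨ b i = 1) →
      MvPolynomial.eval (Sum.elim a b) (f α) * ((∑ i, α i * a i * b i) - β) = 1) :
    ((Fintype.piFinset fun _ : Fin n => S).filter fun α =>
        Module.finrank F' ↥(Submodule.span F'
          (Set.range fun b : Fin n → Bool =>
            MvPolynomial.aeval
              (Sum.elim (MvPolynomial.X : Fin n → MvPolynomial (Fin n) F')
                (fun i => MvPolynomial.C (if b i then (1 : F') else 0)))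
              (f α))) < 2 ^ n).card
      ≤ 2 ^ (2 * n) * S.card ^ (n - 1) := by
  have hb := EvalDim.count_bad F hβ S hSF n
  have hpos : 0 < S.card := hSne.card_pos
  have hsub : ((Fintype.piFinset fun _ : Fin n => S).filter fun α =>
        Module.finrank F' ↥(Submodule.span F'
          (Set.range fun b : Fin n → Bool =>
            MvPolynomial.aeval
              (Sum.elim (MvPolynomial.X : Fin n → MvPolynomial (Fin n) F')
                (fun i => MvPolynomial.C (if b i then (1 : F') else 0)))
              (f α))) < 2 ^ n) ⊆
      ((Fintype.piFinset fun _ : Fin n => S).filter fun α => ¬ EvalDim.Good β α) := by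
    intro α hα
    rw [Finset.mem_filter] at hα ⊢
    refine ⟨hα.1, fun hg => ?_⟩
    have hS := Fintype.mem_piFinset.mp hα.1
    refine absurd hα.2 (not_lt.mpr (le_of_eq ?_))
    rw [finrank_span_eq_card]
    · simp
    · rw [Fintype.linearIndependent_iff]
      intro v hv
      refine congrFun (hg v fun a => ?_)
      have h1 := congrArg (MvPolynomial.eval fun i => if a i then (1 : F') else 0) hv
      rw [map_sum, map_zero] at h1
      rw [← h1]
      refine Finset.sum_congr rfl fun b _ => ?_
      have h2 := hagree α hS (fun i => if a i then (1 : F') else 0)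
        (fun i => if b i then (1 : F') else 0)
        (fun i => by by_cases h : a i <;> simp [h]) (fun i => by by_cases h : b i <;> simp [h])
      have h3 := eq_inv_of_mul_eq_one_left h2
      rw [MvPolynomial.smul_eval, mul_comm]
      congr 1
      unfold EvalDim.sm
      rw [← h3]
      have h4 : ∀ p : MvPolynomial (Fin n ⊕ Fin n) F',
          MvPolynomial.eval (fun i => if a i then (1 : F') else 0)
            (MvPolynomial.aeval
              (Sum.elim (MvPolynomial.X : Fin n → MvPolynomial (Fin n) F')
                (fun i => MvPolynomial.C (if b i then (1 : F') else 0))) p) =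
          MvPolynomial.eval (Sum.elim (fun i => if a i then (1 : F') else 0)
            (fun i => if b i then (1 : F') else 0)) p := by
        intro p
        induction p using MvPolynomial.induction_on with
        | C c => simp
        | add p q hp hq => simp only [map_add, hp, hq]
        | mul_X p i hp =>
          simp only [map_mul, hp, MvPolynomial.aeval_X, MvPolynomial.eval_X]
          congr 1
          cases i <;> simp
      exact (h4 _).symm
  refine (Finset.card_le_card hsub).trans ?_
  rw [pow_mul]
  norm_num
  cases n with
  | zero =>
    refine (Finset.card_filter_le _ _).trans ?_
    simp
  | succ n =>
    refine Nat.le_of_mul_le_mul_right (hb.trans (le_of_eq ?_)) hpos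
    rw [Nat.add_sub_cancel, pow_succ S.card]
    ring
end

section
/- Let n ∈ ℕ, let p be a prime, and let k ∈ ℕ satisfy p^k > 2^{2n}. Let F̃ be a finite field with p^{2k} elements, let F be its subfield with p^k elements, and let β ∈ F̃ \ F. Then there exists α = (α_1,…,α_n) ∈ F^n such that, letting f ∈ F̃[x_1,…,x_n,y_1,…,y_n] be the unique multilinear polynomial satisfying f(a,b)·(Σ_i α_i a_i b_i − β) = 1 for all a, b ∈ {0,1}^n, the F̃-linear span of the polynomials { f(x,b) : b ∈ {0,1}^n } ⊆ F̃[x_1,…,x_n] (where f(x,b) is obtained by substituting y_i := b_i) has dimension at least 2^n. -/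
open Finset Polynomial in
/-- Moebius transform of `1/(α(U) - β)`. -/
noncomputable def moeb {ι K : Type*} [Field K] (β : K) (α : ι → K) (W : Finset ι) : K :=
  ∑ U ∈ W.powerset, (-1) ^ U.card * ((∑ i ∈ U, α i) - β)⁻¹

open Finset Polynomial in
/-- The cleared-denominator polynomial. -/
noncomputable def clr {σ K : Type*} [DecidableEq σ] [Field K] (A : Finset σ) (e d : σ → K) (h : K) :
    K[X] :=
  C h * ∏ U ∈ A, (X + C (d U)) - ∑ U ∈ A, C (e U) * ∏ V ∈ A.erase U, (X + C (d V))

open Finset Polynomial in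
lemma clr_eval {σ K : Type*} [DecidableEq σ] [Field K] (A : Finset σ) (e d : σ → K) (h t : K)
    (ht : ∀ U ∈ A, t + d U ≠ 0) :
    (clr A e d h).eval t = (∏ U ∈ A, (t + d U)) * (h - ∑ U ∈ A, e U * (t + d U)⁻¹) := by
  simp only [clr, eval_sub, eval_mul, eval_C, eval_prod, eval_add, eval_X, eval_finsetSum]
  rw [mul_sub, mul_comm h, mul_sum]
  congr 1
  refine sum_congr rfl fun U hU => ?_
  rw [← mul_prod_erase A _ hU]
  have := ht U hU
  field_simp

open Finset Polynomial in
lemma clr_degree {σ K : Type*} [DecidableEq σ] [Field K] (A : Finset σ) (e d : σ → K) (h : K)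
    (hh : h ≠ 0) : (clr A e d h).degree = A.card := by
  have h1 : (C h * ∏ U ∈ A, (X + C (d U))).degree = A.card := by
    rw [degree_C_mul hh, degree_prod]; simp
  rw [clr, degree_sub_eq_left_of_degree_lt, h1]
  rw [h1]
  refine lt_of_le_of_lt (degree_sum_le _ _) ?_
  rw [Finset.sup_lt_iff (by exact WithBot.bot_lt_coe _)]
  intro U hU
  refine lt_of_le_of_lt (b := (∏ V ∈ A.erase U, (X + C (d V))).degree) ?_ ?_
  · by_cases h0 : e U = 0
    · simp [h0]
    · rw [degree_C_mul h0]
  rw [degree_prod]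
  simp only [degree_X_add_C, sum_const, nsmul_eq_mul, mul_one]
  exact_mod_cast card_erase_lt_of_mem hU

open Finset in
lemma moeb_insert {ι K : Type*} [DecidableEq ι] [Field K] (β t : K) (α : ι → K) (W : Finset ι)
    (i : ι) (hi : i ∉ W) :
    moeb β (Function.update α i t) (insert i W) = moeb β α W -
      ∑ U ∈ W.powerset, (-1) ^ U.card * (t + ((∑ j ∈ U, α j) - β))⁻¹ := by
  have key : ∀ U ∈ W.powerset, ∑ j ∈ U, Function.update α i t j = ∑ j ∈ U, α j := by
    intro U hU
    refine sum_congr rfl fun j hj => ?_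
    rw [Function.update_of_ne]
    rintro rfl
    exact hi (mem_powerset.1 hU hj)
  rw [moeb, moeb, sum_powerset_insert hi, sub_eq_add_neg, ← sum_neg_distrib]
  congr 1
  · exact sum_congr rfl fun U hU => by rw [key U hU]
  · refine sum_congr rfl fun U hU => ?_
    have hiU : i ∉ U := fun h => hi (mem_powerset.1 hU h)
    rw [card_insert_of_notMem hiU, sum_insert hiU, key U hU, Function.update_self, pow_succ,
      add_sub_assoc]
    ring

open Finset Polynomial in
lemma exists_alpha {ι K : Type*} [DecidableEq ι] [Field K] [Finite K] (F : Subfield K) (β : K)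
    (hβ : β ∉ F) (s : Finset ι) (hs : 2 ^ (2 * s.card) < Nat.card F) :
    ∃ α : ι → K, (∀ i, α i ∈ F) ∧ ∀ W ⊆ s, moeb β α W ≠ 0 := by
  induction s using Finset.induction_on with
  | empty =>
    refine ⟨0, fun i => F.zero_mem, fun W hW => ?_⟩
    rw [subset_empty.1 hW]
    have : β ≠ 0 := fun h => hβ (h ▸ F.zero_mem)
    simpa [moeb] using this
  | insert i s hi ih =>
    rw [card_insert_of_notMem hi] at hs
    have hs' : 2 ^ (2 * s.card) < Nat.card F :=
      lt_of_le_of_lt (Nat.pow_le_pow_right (by norm_num) (by omega)) hs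
    obtain ⟨α, hα, hW⟩ := ih hs'
    let P : Finset ι → K[X] := fun W =>
      clr W.powerset (fun U => (-1) ^ U.card) (fun U => (∑ j ∈ U, α j) - β) (moeb β α W)
    have hdeg : ∀ W ∈ s.powerset, (P W).degree = (2 ^ W.card : ℕ) := by
      intro W h
      simp only [P]
      rw [clr_degree _ _ _ _ (hW W (mem_powerset.1 h)), card_powerset]
    have hP : ∀ W ∈ s.powerset, P W ≠ 0 := by
      intro W h h0
      have := hdeg W h
      rw [h0, degree_zero] at this
      exact WithBot.bot_ne_coe this
    have hQ : ∏ W ∈ s.powerset, P W ≠ 0 := prod_ne_zero_iff.2 hP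
    have hQd : (∏ W ∈ s.powerset, P W).natDegree < Nat.card F := by
      refine lt_of_le_of_lt (natDegree_prod_le _ _) (lt_of_le_of_lt ?_ hs')
      calc ∑ W ∈ s.powerset, (P W).natDegree ≤ ∑ W ∈ s.powerset, 2 ^ s.card := by
            refine sum_le_sum fun W h => ?_
            rw [natDegree_eq_of_degree_eq_some (hdeg W h)]
            exact Nat.pow_le_pow_right (by norm_num) (card_le_card (mem_powerset.1 h))
        _ = 2 ^ (2 * s.card) := by
            rw [sum_const, card_powerset, smul_eq_mul, ← pow_add, two_mul]
    have : ∃ t ∈ F, (∏ W ∈ s.powerset, P W).eval t ≠ 0 := by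
      by_contra! hcon
      apply hQ
      have hfin : (F : Set K).Finite := Set.toFinite _
      refine eq_zero_of_natDegree_lt_card_of_eval_eq_zero' _ hfin.toFinset ?_ ?_
      · intro t ht
        exact hcon t (by simpa using ht)
      · rw [← Set.ncard_eq_toFinset_card _ hfin]
        exact hQd
    obtain ⟨t, htF, ht⟩ := this
    rw [eval_prod, prod_ne_zero_iff] at ht
    refine ⟨Function.update α i t, ?_, ?_⟩
    · intro j
      by_cases h : j = i
      · subst h; simpa using htF
      · rw [Function.update_of_ne h]; exact hα j
    · intro W hWs
      by_cases hiW : i ∈ W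
      · rw [← insert_erase hiW, moeb_insert _ _ _ _ _ (notMem_erase i W)]
        have h1 : W.erase i ∈ s.powerset := by
          rw [mem_powerset]; exact subset_insert_iff.1 hWs
        have h2 := ht _ h1
        simp only [P] at h2
        rw [clr_eval] at h2
        · exact right_ne_zero_of_mul h2
        · intro U hU h0
          apply hβ
          have : β = t + ∑ j ∈ U, α j := by linear_combination -h0
          rw [this]
          exact F.add_mem htF (F.sum_mem fun j _ => hα j)
      · have h1 : W ⊆ s := (subset_insert_iff_of_notMem hiW).1 hWs
        have : moeb β (Function.update α i t) W = moeb β α W := by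
          refine sum_congr rfl fun U hU => ?_
          congr 3
          refine sum_congr rfl fun j hj => ?_
          rw [Function.update_of_ne]
          rintro rfl
          exact hiW (mem_powerset.1 hU hj)
        rw [this]
        exact hW W h1

open Finset in
lemma inter_kernel {ι K : Type*} [Fintype ι] [DecidableEq ι] [Field K] (g : Finset ι → K)
    (hg : ∀ W : Finset ι, ∑ U ∈ W.powerset, (-1) ^ U.card * g U ≠ 0) (c : Finset ι → K)
    (hc : ∀ S, ∑ T, c T * g (S ∩ T) = 0) (T : Finset ι) : c T = 0 := by
  have h1 : ∀ W T : Finset ι, ∑ S ∈ W.powerset, (-1) ^ S.card * g (S ∩ T) =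
      if W ⊆ T then ∑ U ∈ W.powerset, (-1) ^ U.card * g U else 0 := by
    intro W T
    split_ifs with h
    · refine sum_congr rfl fun S hS => ?_
      rw [inter_eq_left.2 ((mem_powerset.1 hS).trans h)]
    · obtain ⟨i, hiW, hiT⟩ := not_subset.1 h
      rw [← insert_erase hiW, sum_powerset_insert (notMem_erase i W), ← sum_add_distrib]
      refine sum_eq_zero fun S hS => ?_
      have hiS : i ∉ S := fun h => notMem_erase i W (mem_powerset.1 hS h)
      rw [card_insert_of_notMem hiS, insert_inter_of_notMem hiT, pow_succ]
      ring
  have h2 : ∀ W : Finset ι, ∑ T with W ⊆ T, c T = 0 := by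
    intro W
    have h3 : ∑ S ∈ W.powerset, (-1) ^ S.card * ∑ T, c T * g (S ∩ T) = 0 :=
      sum_eq_zero fun S _ => by rw [hc, mul_zero]
    simp only [mul_sum] at h3
    rw [sum_comm] at h3
    have h4 : ∀ T : Finset ι, ∑ S ∈ W.powerset, (-1) ^ S.card * (c T * g (S ∩ T)) =
        (if W ⊆ T then c T else 0) * ∑ U ∈ W.powerset, (-1) ^ U.card * g U := by
      intro T
      have := h1 W T
      calc _ = c T * ∑ S ∈ W.powerset, (-1) ^ S.card * g (S ∩ T) := by
            rw [mul_sum]; exact sum_congr rfl fun _ _ => by ring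
        _ = _ := by rw [this]; split_ifs <;> simp
    rw [sum_congr rfl fun T _ => h4 T, ← sum_mul] at h3
    rw [sum_filter]
    exact (mul_eq_zero.1 h3).resolve_right (hg W)
  induction T using WellFoundedGT.induction with
  | ind T ih =>
    have h := h2 T
    rwa [sum_eq_single_of_mem T (by simp)] at h
    intro S hS hne
    exact ih S (lt_of_le_of_ne (by simpa using hS) hne.symm)

/-- Functional lower bound against roABPs in the order where `x`
precedes `y`: for `p` prime, `p^k > 2^{2n}`, a finite field `F'` of size `p^{2k}` with
subfield `F` of size `p^k`, and `β ∈ F' \ F`, there exists `α ∈ F^n` so that the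
multilinear polynomial `f` agreeing with `1/(∑ i, α i * x i * y i - β)` on the Boolean
cube has evaluation span `{ f(x, b) : b ∈ {0,1}^n }` of dimension at least `2^n`. -/
theorem roabp_fixed_order_functional_lower_bound
    (n : ℕ) (p : ℕ) (hp : p.Prime) (k : ℕ) (hpk : 2 ^ (2 * n) < p ^ k)
    (F' : Type*) [Field F'] [Fintype F'] (hcard : Fintype.card F' = p ^ (2 * k))
    (F : Subfield F') (hFcard : Nat.card F = p ^ k)
    (β : F') (hβ : β ∉ F) :
    ∃ α : Fin n → F', (∀ i, α i ∈ F) ∧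
      ∀ f : MvPolynomial (Fin n ⊕ Fin n) F',
        (∀ v, f.degreeOf v ≤ 1) →
        (∀ a b : Fin n → F', (∀ i, a i = 0 ∨ a i = 1) → (∀ i, b i = 0 ∨ b i = 1) →
          MvPolynomial.eval (Sum.elim a b) f * ((∑ i, α i * a i * b i) - β) = 1) →
        2 ^ n ≤ Module.finrank F' ↥(Submodule.span F'
          (Set.range fun b : Fin n → Bool =>
            MvPolynomial.aeval
              (Sum.elim (MvPolynomial.X : Fin n → MvPolynomial (Fin n) F')
                (fun i => MvPolynomial.C (if b i then (1 : F') else 0))) f)) := by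
  classical
  obtain ⟨α, hα, hW⟩ := exists_alpha F β hβ (Finset.univ : Finset (Fin n))
    (by rw [hFcard]; simpa using hpk)
  refine ⟨α, hα, fun f _ hf => ?_⟩
  rw [finrank_span_eq_card]
  · simp
  rw [Fintype.linearIndependent_iff]
  intro c hc
  let e : Finset (Fin n) → (Fin n → Bool) := fun T i => decide (i ∈ T)
  have he : Function.Bijective e := by
    constructor
    · intro S T h
      ext i
      simpa [e] using congrFun h i
    · intro b
      refine ⟨Finset.univ.filter fun i => b i = true, ?_⟩
      funext i
      simp [e]
  have key := inter_kernel (fun U => ((∑ i ∈ U, α i) - β)⁻¹)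
    (fun W => hW W (Finset.subset_univ W)) (fun T => c (e T)) ?_
  · intro b
    obtain ⟨T, rfl⟩ := he.2 b
    exact key T
  intro S
  have h1 := congrArg (MvPolynomial.eval (fun i => if i ∈ S then (1 : F') else 0)) hc
  rw [map_sum, map_zero] at h1
  rw [← h1, ← he.sum_comp]
  refine Finset.sum_congr rfl fun T _ => ?_
  rw [MvPolynomial.smul_eval]
  congr 1
  have h2 : MvPolynomial.eval (fun i => if i ∈ S then (1 : F') else 0)
      (MvPolynomial.aeval
              (Sum.elim (MvPolynomial.X : Fin n → MvPolynomial (Fin n) F')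
                (fun i => MvPolynomial.C (if e T i then (1 : F') else 0))) f) =
      MvPolynomial.eval (Sum.elim (fun i => if i ∈ S then (1 : F') else 0)
        (fun i => if i ∈ T then (1 : F') else 0)) f := by
    rw [← MvPolynomial.coe_aeval_eq_eval, ← MvPolynomial.coe_aeval_eq_eval]
    simp only [RingHom.coe_coe]
    rw [← AlgHom.comp_apply, MvPolynomial.comp_aeval]
    congr 2
    funext v
    rcases v with i | i
    · simp
    · by_cases h : i ∈ T <;> simp [e, h]
  rw [h2]
  have h3 := hf (fun i => if i ∈ S then (1 : F') else 0) (fun i => if i ∈ T then (1 : F') else 0)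
    (fun i => by by_cases h : i ∈ S <;> simp [h]) (fun i => by by_cases h : i ∈ T <;> simp [h])
  have h4 : ∑ i, α i * (if i ∈ S then (1 : F') else 0) * (if i ∈ T then (1 : F') else 0) =
      ∑ i ∈ S ∩ T, α i := by
    rw [← Finset.sum_filter_add_sum_filter_not Finset.univ (fun i => i ∈ S ∩ T)]
    rw [Finset.sum_eq_zero (s := Finset.univ.filter fun i => ¬ i ∈ S ∩ T), add_zero]
    · refine Finset.sum_congr (by ext; simp) fun i hi => ?_
      have := Finset.mem_inter.1 hi
      simp [this.1, this.2]
    · intro i hi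
      have : i ∈ S → i ∉ T := by simpa using hi
      by_cases h : i ∈ S
      · simp [this h]
      · simp [h]
  rw [h4] at h3
  exact (eq_inv_of_mul_eq_one_left h3).symm
end

section
/- Let n ∈ ℕ, let p be a prime, and let k ∈ ℕ satisfy p^k > C(2n,n)·2^{2n}. Let F̃ be a finite field with p^{2k} elements, let F be its subfield with p^k elements, and let β ∈ F̃ \ F. Then there exists a family α = (α_{i,j})_{1≤i<j≤2n} of elements of F such that the following holds for every partition of {1,…,2n} into two sets U = {u_1 < … < u_n} and V = {v_1 < … < v_n} of size n each: letting g ∈ F̃[x_1,…,x_{2n}] be the unique multilinear polynomial that agrees with 1/(Σ_{k=1}^n α_{u_k,v_k} x_{u_k} x_{v_k} − β) on {0,1}^{2n} (where α_{u,v} denotes α_{min(u,v),max(u,v)}), the F̃-linear span of the 2^n polynomials obtained from g by substituting x_{v_k} := c_k for all k, over all c ∈ {0,1}^n, has dimension at least 2^n. -/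
open Finset in
theorem edl_moebius {ι K : Type*} [Fintype ι] [DecidableEq ι] [Field K]
    (f l : Finset ι → K)
    (hf : ∀ S : Finset ι, ∑ D ∈ S.powerset, (-1 : K) ^ D.card * f D ≠ 0)
    (hl : ∀ D : Finset ι, ∑ c : Finset ι, l c * f (c ∩ D) = 0) : ∀ c, l c = 0 := by
  have key : ∀ S c : Finset ι, ∑ D ∈ S.powerset, (-1 : K) ^ D.card * f (c ∩ D) =
      if S ⊆ c then ∑ D ∈ S.powerset, (-1 : K) ^ D.card * f D else 0 := by
    intro S c
    split_ifs with h
    · refine sum_congr rfl fun D hD => ?_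
      rw [inter_eq_right.mpr ((mem_powerset.mp hD).trans h)]
    · obtain ⟨e, heS, hec⟩ := not_subset.mp h
      have h1 : S = insert e (S.erase e) := (insert_erase heS).symm
      rw [h1, sum_powerset_insert (notMem_erase e S), ← sum_add_distrib]
      refine sum_eq_zero fun D hD => ?_
      have heD : e ∉ D := fun h => notMem_erase e S (mem_powerset.mp hD h)
      rw [card_insert_of_notMem heD, inter_insert_of_notMem hec]
      ring
  have mu : ∀ S : Finset ι, ∑ c : Finset ι, (if S ⊆ c then l c else 0) = 0 := by
    intro S
    have h0 : ∑ D ∈ S.powerset, (-1 : K) ^ D.card * ∑ c : Finset ι, l c * f (c ∩ D) = 0 :=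
      sum_eq_zero fun D _ => by rw [hl, mul_zero]
    simp_rw [mul_sum] at h0
    rw [sum_comm] at h0
    have h2 : ∀ c : Finset ι, ∑ D ∈ S.powerset, (-1 : K) ^ D.card * (l c * f (c ∩ D)) =
        (if S ⊆ c then l c else 0) * ∑ D ∈ S.powerset, (-1 : K) ^ D.card * f D := by
      intro c
      have : ∑ D ∈ S.powerset, (-1 : K) ^ D.card * (l c * f (c ∩ D)) =
          l c * ∑ D ∈ S.powerset, (-1 : K) ^ D.card * f (c ∩ D) := by
        rw [mul_sum]; exact sum_congr rfl fun D _ => by ring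
      rw [this, key]
      split_ifs <;> simp
    simp_rw [h2] at h0
    rw [← sum_mul] at h0
    exact (mul_eq_zero.mp h0).resolve_right (hf S)
  have main : ∀ m : ℕ, ∀ c : Finset ι, cᶜ.card = m → l c = 0 := by
    intro m
    induction m using Nat.strong_induction_on with
    | _ m ih =>
      intro c hc
      have := mu c
      rw [sum_eq_single c] at this
      · simpa using this
      · intro b _ hb
        split_ifs with h
        · refine ih _ ?_ b rfl
          rw [← hc]
          exact card_lt_card (compl_ssubset_compl.mpr (h.ssubset_of_ne (Ne.symm hb)))
        · rfl
      · simp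
  exact fun c => main _ c rfl

open Finset in
theorem edl_zero_sum_free {ι K : Type*} [DecidableEq ι] [Field K] [Finite K] (F : Subfield K)
    (s : Finset ι) (h : 2 ^ s.card ≤ Nat.card F) :
    ∃ a : ι → K, (∀ i, a i ∈ F) ∧ ∀ T ⊆ s, T.Nonempty → ∑ i ∈ T, a i ≠ 0 := by
  classical
  have := Fintype.ofFinite K
  induction s using Finset.induction_on with
  | empty =>
    refine ⟨fun _ => 0, fun _ => F.zero_mem, fun T hT hne => ?_⟩
    rw [subset_empty.mp hT] at hne
    simp at hne
  | insert e s he ih =>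
    rw [card_insert_of_notMem he] at h
    have hlt : 2 ^ s.card < Nat.card F := lt_of_lt_of_le (by rw [pow_succ]; have : 0 < 2 ^ s.card := by positivity
                                                             omega) h
    obtain ⟨a, haF, ha⟩ := ih hlt.le
    obtain ⟨t, htF, ht⟩ : ∃ t ∈ F, t ∉ s.powerset.image (fun T => - ∑ i ∈ T, a i) := by
      by_contra! hcon
      have h1 : (univ.filter (fun x => x ∈ F)).card ≤ 2 ^ s.card := by
        refine (card_le_card (t := s.powerset.image (fun T => - ∑ i ∈ T, a i)) ?_).trans
          (card_image_le.trans (card_powerset s).le)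
        intro x hx
        exact hcon x (by simpa using hx)
      have h2 : Nat.card F = (univ.filter (fun x => x ∈ F)).card := by
        rw [Nat.card_eq_fintype_card, ← Fintype.card_subtype]
      omega
    refine ⟨Function.update a e t, fun i => ?_, fun T hT hne => ?_⟩
    · rcases eq_or_ne i e with rfl | hi
      · simpa using htF
      · simpa [hi] using haF i
    · by_cases heT : e ∈ T
      · rw [← insert_erase heT, sum_insert (notMem_erase e T)]
        have h3 : ∑ i ∈ T.erase e, Function.update a e t i = ∑ i ∈ T.erase e, a i :=
          sum_congr rfl fun i hi => by simp [ne_of_mem_erase hi]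
        rw [h3, Function.update_self]
        intro h4
        refine ht (mem_image.mpr ⟨T.erase e, mem_powerset.mpr ?_, ?_⟩)
        · intro i hi
          exact (mem_insert.mp (hT (mem_of_mem_erase hi))).resolve_left (ne_of_mem_erase hi)
        · exact (eq_neg_of_add_eq_zero_left h4).symm
      · have h3 : ∑ i ∈ T, Function.update a e t i = ∑ i ∈ T, a i :=
          sum_congr rfl fun i hi => by
            have : i ≠ e := fun h => heT (h ▸ hi)
            simp [this]
        rw [h3]
        exact ha T ((subset_insert_iff_of_notMem heT).mp hT) hne

/-- cleared-denominator polynomial -/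
noncomputable def edlP {ι τ K : Type*} [DecidableEq ι] [Field K] (w : ι → τ) (β : K)
    (S : Finset ι) : MvPolynomial τ K :=
  ∑ T ∈ S.powerset, (-1) ^ T.card *
    ∏ T' ∈ S.powerset.erase T, (∑ i ∈ T', MvPolynomial.X (w i) - MvPolynomial.C β)

theorem edlP_eval {ι τ K : Type*} [DecidableEq ι] [Field K] (w : ι → τ) (β : K)
    (S : Finset ι) (a : τ → K) : MvPolynomial.eval a (edlP w β S) =
    ∑ T ∈ S.powerset, (-1) ^ T.card *
    ∏ T' ∈ S.powerset.erase T, (∑ i ∈ T', a (w i) - β) := by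
  simp [edlP, map_sum, map_prod]

open Finset in
theorem edlP_degree {ι τ K : Type*} [Fintype ι] [DecidableEq ι] [Field K] (w : ι → τ) (β : K)
    (S : Finset ι) : (edlP w β S).totalDegree ≤ 2 ^ Fintype.card ι := by
  refine MvPolynomial.totalDegree_finsetSum_le fun T hT => ?_
  have h1 : (((-1) ^ T.card : MvPolynomial τ K)).totalDegree = 0 := by
    have : ((-1) ^ T.card : MvPolynomial τ K) = MvPolynomial.C ((-1) ^ T.card) := by simp
    rw [this, MvPolynomial.totalDegree_C]
  refine (MvPolynomial.totalDegree_mul _ _).trans ?_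
  rw [h1, zero_add]
  refine (MvPolynomial.totalDegree_finsetProd _ _).trans ?_
  have h2 : ∀ T' ∈ S.powerset.erase T,
      (∑ i ∈ T', MvPolynomial.X (w i) - MvPolynomial.C β : MvPolynomial τ K).totalDegree ≤ 1 := by
    intro T' _
    refine (MvPolynomial.totalDegree_sub_C_le _ _).trans ?_
    exact MvPolynomial.totalDegree_finsetSum_le fun i _ => by simp
  refine (sum_le_card_nsmul _ _ 1 h2).trans ?_
  rw [smul_eq_mul, mul_one]
  refine (card_le_card (erase_subset _ _)).trans ?_
  rw [card_powerset]
  exact Nat.pow_le_pow_right (by norm_num) (card_le_univ S)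

open Finset in
theorem edlP_ne_zero {ι τ K : Type*} [Fintype ι] [DecidableEq ι] [Field K] [Finite K]
    (F : Subfield K)
    (hF : 2 ^ Fintype.card ι ≤ Nat.card F) (w : ι → τ) (hw : Function.Injective w) (β : K)
    (hβ : β ∉ F) (S : Finset ι) : edlP w β S ≠ 0 := by
  rcases S.eq_empty_or_nonempty with rfl | ⟨e, he⟩
  · simp [edlP]
  obtain ⟨a, haF, ha⟩ := edl_zero_sum_free F (univ : Finset ι) hF
  set b : ι → K := Function.update a e (β - ∑ i ∈ S.erase e, a i) with hb
  have hbn : ∀ T : Finset ι, e ∉ T → ∑ i ∈ T, b i = ∑ i ∈ T, a i := fun T heT =>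
    sum_congr rfl fun i hi => by
      have : i ≠ e := fun h => heT (h ▸ hi)
      simp [hb, this]
  have hbS : ∑ i ∈ S, b i = β := by
    rw [← add_sum_erase S b he, hbn _ (notMem_erase e S)]
    simp [hb]
  have hbT : ∀ T, T ⊆ S → T ≠ S → ∑ i ∈ T, b i ≠ β := by
    intro T hT hne
    by_cases heT : e ∈ T
    · intro h
      have h1 := sum_sdiff (f := b) hT
      rw [h, hbS, hbn _ (by simp [heT])] at h1
      refine ha (S \ T) (subset_univ _) ?_ (by simpa using h1)
      rw [sdiff_nonempty]
      exact fun h => hne (hT.antisymm h)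
    · rw [hbn T heT]
      intro h
      exact hβ (h ▸ F.sum_mem fun i _ => haF i)
  intro h0
  have h1 := edlP_eval w β S (Function.extend w b 0)
  rw [h0, map_zero] at h1
  simp_rw [hw.extend_apply] at h1
  rw [sum_eq_single S] at h1
  · have h2 := h1.symm
    rw [mul_eq_zero] at h2
    rcases h2 with h2 | h2
    · exact pow_ne_zero _ (by simp) h2
    · rw [prod_eq_zero_iff] at h2
      obtain ⟨T, hT, hT2⟩ := h2
      rw [mem_erase, mem_powerset] at hT
      exact hbT T hT.2 hT.1 (sub_eq_zero.mp hT2)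
  · intro T _ hT
    rw [prod_eq_zero (i := S) (by simp [hT.symm]) (by simp [hbS]), mul_zero]
  · simp

open Finset in
theorem edlP_moebius {ι τ K : Type*} [DecidableEq ι] [Field K] (w : ι → τ) (β : K)
    (S : Finset ι) (a : τ → K) (hne : ∀ T : Finset ι, ∑ i ∈ T, a (w i) - β ≠ 0)
    (h : MvPolynomial.eval a (edlP w β S) ≠ 0) :
    ∑ T ∈ S.powerset, (-1 : K) ^ T.card * (∑ i ∈ T, a (w i) - β)⁻¹ ≠ 0 := by
  intro h0
  apply h
  rw [edlP_eval]
  have : ∀ T ∈ S.powerset, (-1 : K) ^ T.card *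
      ∏ T' ∈ S.powerset.erase T, (∑ i ∈ T', a (w i) - β) =
      ((-1 : K) ^ T.card * (∑ i ∈ T, a (w i) - β)⁻¹) *
        ∏ T' ∈ S.powerset, (∑ i ∈ T', a (w i) - β) := by
    intro T hT
    rw [← mul_prod_erase _ _ hT]
    have := hne T
    field_simp
  rw [sum_congr rfl this, ← sum_mul, h0, zero_mul]

/-- Evaluation-dimension lower bound for every balanced partition:
for `p` prime, `p^k > C(2n,n)·2^{2n}`, a finite field `F'` of size `p^{2k}` with
subfield `F` of size `p^k`, and `β ∈ F' \ F`, there is a family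
`α = (α_{i,j})` of elements of `F` such that for every partition of the `2n` variables
into increasing lists `u` and `v` of length `n`, the multilinear polynomial `g` agreeing
with `1/(∑ k, α_{u k, v k} * x_{u k} * x_{v k} - β)` on the Boolean cube has the
property that the span of the `2^n` polynomials obtained from `g` by substituting
Boolean constants for the variables `x_{v k}` has dimension at least `2^n`. -/
theorem evaluation_dimension_lower_bound_any_partition
    (n : ℕ) (p : ℕ) (hp : p.Prime) (k : ℕ)
    (hpk : Nat.choose (2 * n) n * 2 ^ (2 * n) < p ^ k)
    (F' : Type*) [Field F'] [Fintype F'] (hcard : Fintype.card F' = p ^ (2 * k))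
    (F : Subfield F') (hFcard : Nat.card F = p ^ k)
    (β : F') (hβ : β ∉ F) :
    ∃ α : Fin (2 * n) → Fin (2 * n) → F', (∀ i j, α i j ∈ F) ∧
      ∀ u v : Fin n → Fin (2 * n), StrictMono u → StrictMono v →
        (∀ x : Fin (2 * n), (∃ k', u k' = x) ∨ (∃ k', v k' = x)) →
        (∀ k' l, u k' ≠ v l) →
        ∀ g : MvPolynomial (Fin (2 * n)) F',
          (∀ x, g.degreeOf x ≤ 1) →
          (∀ a : Fin (2 * n) → F', (∀ x, a x = 0 ∨ a x = 1) →
            MvPolynomial.eval a g *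
              ((∑ k' : Fin n,
                α (min (u k') (v k')) (max (u k') (v k')) * a (u k') * a (v k')) - β) = 1) →
          ∀ σ : (Fin n → Bool) → Fin (2 * n) → MvPolynomial (Fin (2 * n)) F',
            (∀ c k', σ c (u k') = MvPolynomial.X (u k')) →
            (∀ c k', σ c (v k') = MvPolynomial.C (if c k' then (1 : F') else 0)) →
            2 ^ n ≤ Module.finrank F' ↥(Submodule.span F'
              (Set.range fun c : Fin n → Bool => MvPolynomial.aeval (σ c) g)) := by
  classical
  let τ := Fin (2 * n) × Fin (2 * n)
  let W : (Fin n → Fin (2 * n)) → (Fin n → Fin (2 * n)) → Fin n → τ :=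
    fun u v i => (min (u i) (v i), max (u i) (v i))
  let G : Finset (Fin (2 * n)) → Finset (Fin n) → MvPolynomial τ F' := fun U S =>
    if h : U.card = n ∧ Uᶜ.card = n then
      edlP (W (U.orderEmbOfFin h.1) (Uᶜ.orderEmbOfFin h.2)) β S else 1
  have hWinj : ∀ u v : Fin n → Fin (2 * n), StrictMono u → StrictMono v →
      (∀ k' l, u k' ≠ v l) → Function.Injective (W u v) := by
    intro u v hu hv huv i j hij
    replace hij := congrArg Prod.fst hij
    simp only [W] at hij
    rcases le_total (u i) (v i) with h1 | h1 <;> rcases le_total (u j) (v j) with h2 | h2 <;>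
      simp only [min_eq_left h1, min_eq_left h2, min_eq_right h1, min_eq_right h2] at hij
    · exact hu.injective hij
    · exact absurd hij (huv _ _)
    · exact absurd hij.symm (huv _ _)
    · exact hv.injective hij
  have hFbig : 2 ^ Fintype.card (Fin n) ≤ Nat.card F := by
    rw [Fintype.card_fin, hFcard]
    refine le_trans ?_ hpk.le
    refine le_trans (Nat.pow_le_pow_right (by norm_num) (by omega : n ≤ 2 * n)) ?_
    exact Nat.le_mul_of_pos_left _ (Nat.choose_pos (by omega))
  have hGne : ∀ U S, G U S ≠ 0 := by
    intro U S
    simp only [G]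
    split_ifs with h
    · refine edlP_ne_zero F hFbig _ (hWinj _ _ (U.orderEmbOfFin h.1).strictMono
        (Uᶜ.orderEmbOfFin h.2).strictMono ?_) β hβ S
      intro i j hij
      have h1 := U.orderEmbOfFin_mem h.1 i
      have h2 := Uᶜ.orderEmbOfFin_mem h.2 j
      rw [← hij] at h2
      exact (Finset.mem_compl.mp h2) h1
    · exact one_ne_zero
  have hGdeg : ∀ U S, (G U S).totalDegree ≤ 2 ^ n := by
    intro U S
    simp only [G]
    split_ifs with h
    · simpa using edlP_degree (W (U.orderEmbOfFin h.1) (Uᶜ.orderEmbOfFin h.2)) β S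
    · simp
  let Q : MvPolynomial τ F' :=
    ∏ U ∈ Finset.powersetCard n Finset.univ, ∏ S : Finset (Fin n), G U S
  have hQne : Q ≠ 0 :=
    Finset.prod_ne_zero_iff.mpr fun U _ => Finset.prod_ne_zero_iff.mpr fun S _ => hGne U S
  have hQdeg : Q.totalDegree ≤ Nat.choose (2 * n) n * 2 ^ (2 * n) := by
    refine (MvPolynomial.totalDegree_finsetProd _ _).trans ?_
    refine (Finset.sum_le_card_nsmul _ _ (2 ^ (2 * n)) fun U _ => ?_).trans ?_
    · refine (MvPolynomial.totalDegree_finsetProd _ _).trans ?_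
      refine (Finset.sum_le_card_nsmul _ _ (2 ^ n) fun S _ => hGdeg U S).trans ?_
      simp [two_mul, pow_add]
    · simp
  obtain ⟨α, hαF, hα⟩ : ∃ α : τ → F', (∀ t, α t ∈ F) ∧ MvPolynomial.eval α Q ≠ 0 := by
    by_contra! hcon
    apply hQne
    refine MvPolynomial.eq_zero_of_eval_zero_at_prod_finset Q
      (fun _ => Finset.univ.filter (fun x => x ∈ F)) ?_ ?_
    · intro t
      refine lt_of_le_of_lt ((MvPolynomial.degreeOf_le_totalDegree _ _).trans hQdeg)
        (lt_of_lt_of_le hpk (le_of_eq ?_))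
      rw [← hFcard, Nat.card_eq_fintype_card, ← Fintype.card_subtype]
    · intro x hx
      exact hcon x fun t => by simpa using hx t
  refine ⟨fun i j => α (i, j), fun i j => hαF _, ?_⟩
  intro u v hu hv hcov hdis g _ hg σ hσu hσv
  have hP : ∀ S, MvPolynomial.eval α (edlP (W u v) β S) ≠ 0 := by
    intro S
    set U : Finset (Fin (2 * n)) := Finset.univ.image u with hU
    have hUc : Uᶜ = Finset.univ.image v := by
      ext x
      simp only [hU, Finset.mem_compl, Finset.mem_image, Finset.mem_univ, true_and]
      constructor
      · exact fun h => (hcov x).resolve_left h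
      · rintro ⟨l, rfl⟩ ⟨m, hm⟩
        exact hdis m l hm
    have h1 : U.card = n := by
      rw [hU, Finset.card_image_of_injective _ hu.injective]; simp
    have h2 : Uᶜ.card = n := by
      rw [hUc, Finset.card_image_of_injective _ hv.injective]; simp
    have e1 : u = U.orderEmbOfFin h1 :=
      Finset.orderEmbOfFin_unique h1 (fun x => by simp [hU]) hu
    have e2 : v = Uᶜ.orderEmbOfFin h2 :=
      Finset.orderEmbOfFin_unique h2 (fun x => by rw [hUc]; simp) hv
    have h3 : G U S = edlP (W u v) β S := by
      simp only [G]
      rw [dif_pos ⟨h1, h2⟩, ← e1, ← e2]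
    rw [← h3]
    simp only [Q, map_prod] at hα
    rw [Finset.prod_ne_zero_iff] at hα
    have := hα U (Finset.mem_powersetCard.mpr ⟨Finset.subset_univ _, h1⟩)
    rw [Finset.prod_ne_zero_iff] at this
    exact this S (Finset.mem_univ _)
  have hne : ∀ T : Finset (Fin n), ∑ i ∈ T, α (W u v i) - β ≠ 0 := by
    intro T h
    exact hβ (sub_eq_zero.mp h ▸ F.sum_mem fun i _ => hαF _)
  let B : Finset (Fin n) → Fin n → Bool := fun S i => decide (i ∈ S)
  have hB : Function.Surjective B := by
    intro c
    refine ⟨Finset.univ.filter (fun i => c i = true), ?_⟩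
    funext i
    simp [B]
  have hev : ∀ c D : Finset (Fin n), MvPolynomial.eval
      (fun x => if ∃ i ∈ D, u i = x then (1 : F') else 0)
      (MvPolynomial.aeval (σ (B c)) g) = (∑ i ∈ c ∩ D, α (W u v i) - β)⁻¹ := by
    intro c D
    set b : Fin (2 * n) → F' := fun x => if ∃ i ∈ D, u i = x then (1 : F') else 0 with hb
    have h1 : MvPolynomial.eval b (MvPolynomial.aeval (σ (B c)) g) =
        MvPolynomial.eval (fun x => MvPolynomial.eval b (σ (B c) x)) g := by
      have h0 : (MvPolynomial.eval b).comp MvPolynomial.C = RingHom.id F' := by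
        ext; simp
      rw [MvPolynomial.aeval_def, MvPolynomial.algebraMap_eq, MvPolynomial.eval_eval₂, h0,
        MvPolynomial.eval₂_id]
    have hu1 : ∀ i, MvPolynomial.eval b (σ (B c) (u i)) = if i ∈ D then 1 else 0 := by
      intro i
      rw [hσu, MvPolynomial.eval_X]
      simp [hb, hu.injective.eq_iff]
    have hv1 : ∀ i, MvPolynomial.eval b (σ (B c) (v i)) = if i ∈ c then 1 else 0 := by
      intro i
      rw [hσv, MvPolynomial.eval_C]
      simp [B]
    rw [h1]
    refine eq_inv_of_mul_eq_one_left ?_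
    have h2 := hg (fun x => MvPolynomial.eval b (σ (B c) x)) ?_
    · rw [← h2]
      congr 2
      simp only [hu1, hv1]
      rw [← Finset.sum_filter_add_sum_filter_not Finset.univ (fun i => i ∈ c ∩ D)]
      rw [Finset.sum_eq_zero (s := Finset.univ.filter (fun i => ¬ i ∈ c ∩ D)), add_zero]
      · rw [Finset.filter_mem_eq_inter, Finset.univ_inter]
        refine Finset.sum_congr rfl fun i hi => ?_
        rw [Finset.mem_inter] at hi
        simp [hi.1, hi.2, W]
      · intro i hi
        simp only [Finset.mem_filter, Finset.mem_inter, Finset.mem_univ, true_and, not_and] at hi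
        by_cases hc : i ∈ c
        · simp [hi hc]
        · simp [hc]
    · intro x
      rcases hcov x with ⟨i, rfl⟩ | ⟨i, rfl⟩
      · simp only [hu1]; split_ifs <;> simp
      · simp only [hv1]; split_ifs <;> simp
  have hli : LinearIndependent F' (fun c : Finset (Fin n) => MvPolynomial.aeval (σ (B c)) g) := by
    rw [Fintype.linearIndependent_iff]
    intro l hl
    refine edl_moebius (fun T => (∑ i ∈ T, α (W u v i) - β)⁻¹) l
      (fun S => edlP_moebius (W u v) β S α hne (hP S)) ?_
    intro D
    have h1 := congrArg (MvPolynomial.eval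
      (fun x => if ∃ i ∈ D, u i = x then (1 : F') else 0)) hl
    rw [map_sum, map_zero] at h1
    rw [← h1]
    refine Finset.sum_congr rfl fun c _ => ?_
    rw [MvPolynomial.smul_eval, hev]
  have h1 := finrank_span_eq_card hli
  have h2 : Set.range (fun c : Finset (Fin n) => MvPolynomial.aeval (σ (B c)) g) =
      Set.range (fun c : Fin n → Bool => MvPolynomial.aeval (σ c) g) :=
    hB.range_comp (fun c : Fin n → Bool => MvPolynomial.aeval (σ c) g)
  rw [h2] at h1
  rw [h1]
  simp
end

section
/- Let p be a prime and k, n ≥ 1. Let F be a field of characteristic p containing a subfield F₀ with exactly p^k elements. Let α_1,…,α_n ∈ F₀, let β ∈ F \ F₀, and set L(x) = Σ_{i=1}^n α_i x_i − β. Then L has no zero in {0,1}^n, and there exist polynomials A, B_1,…,B_n ∈ F[x_1,…,x_n] such that A·L + Σ_{i=1}^n B_i·(x_i² − x_i) = 1, with deg A ≤ k(p−1) and deg B_i ≤ k(p−1) for every i. -/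
theorem aux_pow_ne {F : Type*} [Field F] (F₀ : Subfield F) (q : ℕ) (hq : 1 < q)
    (hF₀ : Nat.card F₀ = q) (β : F) (hβ : β ∉ F₀) : β ^ q ≠ β := by
  classical
  intro h
  have hfin : Finite F₀ := Nat.finite_of_card_ne_zero (by omega)
  have : Fintype F₀ := Fintype.ofFinite F₀
  have hne := FiniteField.X_pow_card_sub_X_ne_zero F hq
  have hd := FiniteField.X_pow_card_sub_X_natDegree_eq F hq
  have hc : (insert β (Finset.univ.image (fun x : F₀ => (x : F)))).card = q + 1 := by
    rw [Finset.card_insert_of_notMem, Finset.card_image_of_injective _ Subtype.val_injective,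
      Finset.card_univ, ← Nat.card_eq_fintype_card, hF₀]
    simpa using hβ
  have hle := Polynomial.card_le_degree_of_subset_roots
    (p := (Polynomial.X ^ q - Polynomial.X : Polynomial F))
    (Z := insert β (Finset.univ.image (fun x : F₀ => (x : F)))) (by
      intro z hz
      rw [Polynomial.mem_roots hne]
      have hz' : z = β ∨ z ∈ F₀ := by simpa using hz
      have : z ^ q = z := by
        rcases hz' with rfl | hz'
        · exact h
        · have := FiniteField.pow_card (⟨z, hz'⟩ : F₀)
          rw [← Nat.card_eq_fintype_card, hF₀] at this
          exact congrArg Subtype.val this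
      simp [this])
  omega

theorem aux_prod {F : Type*} [Field F] (p : ℕ) (hp : 1 ≤ p) (u : F) (k : ℕ) :
    (∏ j ∈ Finset.range k, (u ^ p ^ j) ^ (p - 1)) * u = u ^ p ^ k := by
  induction k with
  | zero => simp
  | succ k ih =>
    rw [Finset.prod_range_succ, mul_right_comm, ih, ← pow_succ', Nat.sub_add_cancel hp,
      ← pow_mul, pow_succ]

/-- Constant-degree Nullstellensatz refutation of an unsatisfiable
linear polynomial over positive characteristic: if `F` has characteristic `p`,
contains a subfield `F₀` of size `p^k`, all `α i ∈ F₀` and `β ∉ F₀`, then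
`L = ∑ i, α i * x i - β` has no Boolean zero and there is a certificate
`A·L + ∑ i, B i·(x i² - x i) = 1` with `deg A ≤ k(p-1)` and `deg (B i) ≤ k(p-1)`. -/
theorem nullstellensatz_certificate_linear_positive_char
    (p : ℕ) (hp : p.Prime) (k n : ℕ) (hk : 1 ≤ k) (hn : 1 ≤ n)
    (F : Type*) [Field F] [CharP F p]
    (F₀ : Subfield F) (hF₀ : Nat.card F₀ = p ^ k)
    (α : Fin n → F) (hα : ∀ i, α i ∈ F₀) (β : F) (hβ : β ∉ F₀) :
    (∀ a : Fin n → F, (∀ i, a i = 0 ∨ a i = 1) →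
      MvPolynomial.eval a
        ((∑ i, MvPolynomial.C (α i) * MvPolynomial.X i) - MvPolynomial.C β) ≠ 0) ∧
    ∃ (A : MvPolynomial (Fin n) F) (B : Fin n → MvPolynomial (Fin n) F),
      A * ((∑ i, MvPolynomial.C (α i) * MvPolynomial.X i) - MvPolynomial.C β) +
          ∑ i, B i * (MvPolynomial.X i ^ 2 - MvPolynomial.X i) = 1 ∧
      A.totalDegree ≤ k * (p - 1) ∧ ∀ i, (B i).totalDegree ≤ k * (p - 1) := by
  classical
  have hp1 : 1 < p := hp.one_lt
  have : Fact p.Prime := ⟨hp⟩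
  have hexp : ExpChar F p := ExpChar.prime hp
  have hq : 1 < p ^ k := Nat.one_lt_pow (by omega) hp1
  have hmem : ∀ a : Fin n → F, (∀ i, a i = 0 ∨ a i = 1) → ∑ i, α i * a i ∈ F₀ := by
    intro a ha
    refine sum_mem fun i _ => mul_mem (hα i) ?_
    rcases ha i with h | h <;> rw [h]
    · exact zero_mem _
    · exact one_mem _
  refine ⟨?_, ?_⟩
  · intro a ha h0
    apply hβ
    have h1 : ∑ i, α i * a i = β := by simpa [sub_eq_zero] using h0
    exact h1 ▸ hmem a ha
  have hc : β - β ^ p ^ k ≠ 0 :=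
    sub_ne_zero.2 (aux_pow_ne F₀ _ hq hF₀ β hβ).symm
  let ℓ : ℕ → MvPolynomial (Fin n) F := fun j =>
    (∑ i, MvPolynomial.C (α i ^ p ^ j) * MvPolynomial.X i) - MvPolynomial.C (β ^ p ^ j)
  have hℓdeg : ∀ j, (ℓ j).totalDegree ≤ 1 := by
    intro j
    refine (MvPolynomial.totalDegree_sub _ _).trans (max_le ?_ (by rw [MvPolynomial.totalDegree_C]; exact zero_le_one))
    refine MvPolynomial.totalDegree_finsetSum_le fun i _ => ?_
    refine (MvPolynomial.totalDegree_mul _ _).trans (by rw [MvPolynomial.totalDegree_C, MvPolynomial.totalDegree_X])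
  have hL : (∑ i, MvPolynomial.C (α i) * MvPolynomial.X i) - MvPolynomial.C β = ℓ 0 := by
    simp [ℓ]
  rw [hL]
  let A : MvPolynomial (Fin n) F := MvPolynomial.C (β - β ^ p ^ k)⁻¹ *
    ((∏ j ∈ Finset.range k, ℓ j ^ (p - 1)) - 1)
  have hA : A.totalDegree ≤ k * (p - 1) := by
    refine (MvPolynomial.totalDegree_mul _ _).trans ?_
    rw [MvPolynomial.totalDegree_C, zero_add]
    refine (MvPolynomial.totalDegree_sub _ _).trans (max_le ?_ (by simp))
    refine (MvPolynomial.totalDegree_finsetProd _ _).trans ?_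
    refine (Finset.sum_le_card_nsmul _ _ (p - 1) fun j _ => ?_).trans (by simp)
    refine (MvPolynomial.totalDegree_pow _ _).trans ?_
    exact (Nat.mul_le_mul_left _ (hℓdeg j)).trans (by simp)
  have heval : ∀ a : Fin n → F, (∀ i, a i ∈ ({0, 1} : Finset F)) →
      MvPolynomial.eval a (1 - A * ℓ 0) = 0 := by
    intro a ha
    have ha' : ∀ i, a i = 0 ∨ a i = 1 := fun i => by simpa using ha i
    have hap : ∀ i j, a i ^ p ^ j = a i := by
      intro i j
      rcases ha' i with h | h <;> rw [h]
      · exact zero_pow (pow_ne_zero _ hp.ne_zero)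
      · exact one_pow _
    have hy : (∑ i, α i * a i) ^ p ^ k = ∑ i, α i * a i := by
      have hfin : Finite F₀ := Nat.finite_of_card_ne_zero (by omega)
      have : Fintype F₀ := Fintype.ofFinite F₀
      have h := FiniteField.pow_card (⟨_, hmem a ha'⟩ : F₀)
      rw [← Nat.card_eq_fintype_card, hF₀] at h
      exact congrArg Subtype.val h
    have hℓe : ∀ j, MvPolynomial.eval a (ℓ j) = ((∑ i, α i * a i) - β) ^ p ^ j := by
      intro j
      rw [← iterateFrobenius_def p j, map_sub (iterateFrobenius F p j), map_sum (iterateFrobenius F p j)]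
      simp [ℓ, iterateFrobenius_def, mul_pow, hap]
    have hprod := aux_prod p hp.one_le ((∑ i, α i * a i) - β) k
    have hfr : ((∑ i, α i * a i) - β) ^ p ^ k = (∑ i, α i * a i) - β ^ p ^ k := by
      rw [← iterateFrobenius_def p k, map_sub, iterateFrobenius_def, iterateFrobenius_def, hy]
    rw [hfr] at hprod
    have hpe : MvPolynomial.eval a (∏ j ∈ Finset.range k, ℓ j ^ (p - 1)) =
        ∏ j ∈ Finset.range k, (((∑ i, α i * a i) - β) ^ p ^ j) ^ (p - 1) := by
      rw [map_prod]
      exact Finset.prod_congr rfl fun j _ => by rw [map_pow, hℓe]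
    have h0 : MvPolynomial.eval a (ℓ 0) = (∑ i, α i * a i) - β := by simpa using hℓe 0
    simp only [A, map_sub, map_mul, map_one, MvPolynomial.eval_C, hpe, h0]
    rw [mul_assoc, sub_mul, hprod, one_mul, sub_sub_sub_cancel_left, inv_mul_cancel₀ hc, sub_self]
  obtain ⟨h, hdeg, hf⟩ := MvPolynomial.combinatorial_nullstellensatz_exists_linearCombination
    (fun _ : Fin n => ({0, 1} : Finset F)) (fun _ => by simp) (1 - A * ℓ 0) heval
  have hP : ∀ i : Fin n, ∏ r ∈ ({0, 1} : Finset F), (MvPolynomial.X i - MvPolynomial.C r) =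
      (MvPolynomial.X i * (MvPolynomial.X i - 1) : MvPolynomial (Fin n) F) := by
    intro i
    rw [Finset.prod_pair zero_ne_one]
    simp
  have hfdeg : (1 - A * ℓ 0).totalDegree ≤ k * (p - 1) + 1 := by
    refine (MvPolynomial.totalDegree_sub _ _).trans (max_le (by simp) ?_)
    exact (MvPolynomial.totalDegree_mul _ _).trans (add_le_add hA (hℓdeg 0))
  refine ⟨A, h, ?_, hA, ?_⟩
  · have : ∑ i, h i * (MvPolynomial.X i ^ 2 - MvPolynomial.X i) = 1 - A * ℓ 0 := by
      rw [hf, Finsupp.linearCombination_apply, Finsupp.sum_fintype _ _ (by simp)]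
      refine Finset.sum_congr rfl fun i _ => ?_
      rw [hP, smul_eq_mul]
      ring
    rw [this]
    ring
  · intro i
    by_cases hi : h i = 0
    · simp [hi]
    have h1 : (MvPolynomial.X i - 1 : MvPolynomial (Fin n) F) ≠ 0 := by
      intro h0
      have := congrArg (MvPolynomial.eval (fun _ => (0 : F))) h0
      simp at this
    have h2 := hdeg i
    rw [hP, mul_assoc, MvPolynomial.totalDegree_mul_of_isDomain (MvPolynomial.X_ne_zero i)
      (mul_ne_zero h1 hi), MvPolynomial.totalDegree_mul_of_isDomain h1 hi,
      MvPolynomial.totalDegree_X] at h2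
    omega
end

section
/- Let p be a prime, F a field of characteristic p, and α_1,…,α_n, β ∈ F. Set L_0(x) = Σ_{i=1}^n α_i x_i − β and, for each integer j ≥ 1, L_j(x) = Σ_{i=1}^n α_i^{p^j} x_i − β^{p^j}. Then for every j ≥ 1 there exist polynomials A_j, B_{j,1},…,B_{j,n} ∈ F[x_1,…,x_n] such that L_j = A_j·L_0 + Σ_{i=1}^n B_{j,i}·(x_i^p − x_i), with deg A_j ≤ j(p−1) and deg B_{j,i} ≤ j(p−1) for every i. -/
/-- Each Frobenius twist `L_j = ∑ i, α i^{p^j} * x i - β^{p^j}` of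
the linear polynomial `L_0 = ∑ i, α i * x i - β` is a multiple of `L_0` modulo the
ideal generated by `x i^p - x i`, with cofactors of degree at most `j(p-1)`. -/
theorem frobenius_twist_multiple_of_linear
    (p : ℕ) (hp : p.Prime) (F : Type*) [Field F] [CharP F p]
    (n : ℕ) (α : Fin n → F) (β : F) :
    ∀ j : ℕ, 1 ≤ j →
      ∃ (A : MvPolynomial (Fin n) F) (B : Fin n → MvPolynomial (Fin n) F),
        ((∑ i, MvPolynomial.C (α i ^ p ^ j) * MvPolynomial.X i)
            - MvPolynomial.C (β ^ p ^ j)) =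
          A * ((∑ i, MvPolynomial.C (α i) * MvPolynomial.X i) - MvPolynomial.C β) +
            ∑ i, B i * (MvPolynomial.X i ^ p - MvPolynomial.X i) ∧
        A.totalDegree ≤ j * (p - 1) ∧ ∀ i, (B i).totalDegree ≤ j * (p - 1) := by
  intro j _
  have : Fact p.Prime := ⟨hp⟩
  induction j with
  | zero => exact ⟨1, 0, by simp, by simp, by simp⟩
  | succ j ih =>
    by_cases hj : 1 ≤ j ∨ j = 0
    swap
    · omega
    have ih' : ∃ (A : MvPolynomial (Fin n) F) (B : Fin n → MvPolynomial (Fin n) F),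
        ((∑ i, MvPolynomial.C (α i ^ p ^ j) * MvPolynomial.X i)
            - MvPolynomial.C (β ^ p ^ j)) =
          A * ((∑ i, MvPolynomial.C (α i) * MvPolynomial.X i) - MvPolynomial.C β) +
            ∑ i, B i * (MvPolynomial.X i ^ p - MvPolynomial.X i) ∧
        A.totalDegree ≤ j * (p - 1) ∧ ∀ i, (B i).totalDegree ≤ j * (p - 1) := by
      rcases hj with hj | rfl
      · exact ih hj
      · exact ⟨1, 0, by simp, by simp, by simp⟩
    obtain ⟨A, B, h, hA, hB⟩ := ih'
    have hL : ((∑ i, MvPolynomial.C (α i ^ p ^ j) * MvPolynomial.X i)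
            - MvPolynomial.C (β ^ p ^ j) : MvPolynomial (Fin n) F).totalDegree ≤ 1 := by
      refine (MvPolynomial.totalDegree_sub _ _).trans (max_le ?_ (by rw [MvPolynomial.totalDegree_C]; omega))
      refine MvPolynomial.totalDegree_finsetSum_le fun i _ => ?_
      refine (MvPolynomial.totalDegree_mul _ _).trans ?_
      rw [MvPolynomial.totalDegree_C, MvPolynomial.totalDegree_X]
    have hF : ((∑ i, MvPolynomial.C (α i ^ p ^ j) * MvPolynomial.X i)
            - MvPolynomial.C (β ^ p ^ j) : MvPolynomial (Fin n) F) ^ p =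
        (∑ i, MvPolynomial.C (α i ^ p ^ (j + 1)) * MvPolynomial.X i ^ p)
            - MvPolynomial.C (β ^ p ^ (j + 1)) := by
      rw [sub_pow_char, sum_pow_char]
      simp only [mul_pow, ← MvPolynomial.C_pow, ← pow_mul, ← pow_succ]
    generalize ((∑ i, MvPolynomial.C (α i ^ p ^ j) * MvPolynomial.X i)
            - MvPolynomial.C (β ^ p ^ j) : MvPolynomial (Fin n) F) = L at h hL hF
    have hLp : (L ^ (p - 1)).totalDegree ≤ p - 1 :=
      (MvPolynomial.totalDegree_pow _ _).trans (by nlinarith)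
    refine ⟨L ^ (p - 1) * A, fun i => L ^ (p - 1) * B i - MvPolynomial.C (α i ^ p ^ (j + 1)),
      ?_, ?_, fun i => ?_⟩
    · have e : L ^ p = L ^ (p - 1) * L := by
        rw [← pow_succ, Nat.sub_add_cancel hp.one_le]
      have e2 := hF.symm.trans e
      clear hLp
      generalize L ^ (p - 1) = M at e2 ⊢
      rw [h, mul_add, Finset.mul_sum] at e2
      simp only [sub_mul, Finset.sum_sub_distrib, mul_sub, mul_assoc] at e2 ⊢
      linear_combination e2
    · refine (MvPolynomial.totalDegree_mul _ _).trans ?_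
      rw [add_mul]; omega
    · refine (MvPolynomial.totalDegree_sub _ _).trans (max_le ?_ (by rw [MvPolynomial.totalDegree_C]; omega))
      refine (MvPolynomial.totalDegree_mul _ _).trans ?_
      have := hB i
      rw [add_mul]; omega
end

section
/- Let p be a prime, k ≥ 1, and let F be a finite field with p^k elements. Let α_1,…,α_n, β ∈ F satisfy Σ_{i=1}^n α_i a_i ≠ β for every a ∈ {0,1}^n. Then there exist polynomials A, B_1,…,B_n ∈ F[x_1,…,x_n] such that A·(Σ_{i=1}^n α_i x_i − β) + Σ_{j=1}^n B_j·(x_j² − x_j) = 1, with deg A ≤ k(p−1) and deg B_j ≤ k(p−1) + 1 for every j. -/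
/-- Degree-`O(kp)` Nullstellensatz certificate for a degree-1
polynomial over `F = F_{p^k}` that is unsatisfiable over the Boolean cube:
there exist `A, B_1, …, B_n` with
`A·(∑ i, α i x i - β) + ∑ j, B j·(x j² - x j) = 1`, `deg A ≤ k(p-1)` and
`deg (B j) ≤ k(p-1) + 1`. -/
theorem nullstellensatz_certificate_degree_upper_bound
    (p : ℕ) (hp : p.Prime) (k : ℕ) (hk : 1 ≤ k)
    (F : Type*) [Field F] [Fintype F] (hcard : Fintype.card F = p ^ k)
    (n : ℕ) (α : Fin n → F) (β : F)
    (hunsat : ∀ a : Fin n → F, (∀ i, a i = 0 ∨ a i = 1) → (∑ i, α i * a i) ≠ β) :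
    ∃ (A : MvPolynomial (Fin n) F) (B : Fin n → MvPolynomial (Fin n) F),
      A * ((∑ i, MvPolynomial.C (α i) * MvPolynomial.X i) - MvPolynomial.C β) +
          ∑ j, B j * (MvPolynomial.X j ^ 2 - MvPolynomial.X j) = 1 ∧
      A.totalDegree ≤ k * (p - 1) ∧ ∀ j, (B j).totalDegree ≤ k * (p - 1) + 1 := by
  classical
  obtain ⟨m, rfl⟩ : ∃ m, k = m + 1 := ⟨k - 1, by omega⟩
  obtain ⟨r, rfl⟩ : ∃ r, p = r + 2 := ⟨p - 2, by have := hp.two_le; omega⟩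
  have : Fact (r + 2).Prime := ⟨hp⟩
  have : CharP F (r + 2) := charP_of_card_eq_prime_pow hcard
  let L : ℕ → MvPolynomial (Fin n) F := fun j =>
    (∑ i, MvPolynomial.C (α i ^ (r + 2) ^ j) * MvPolynomial.X i)
      - MvPolynomial.C (β ^ (r + 2) ^ j)
  have hL0 : (∑ i, MvPolynomial.C (α i) * MvPolynomial.X i) - MvPolynomial.C β = L 0 := by
    simp [L]
  have hLdeg : ∀ j, (L j).totalDegree ≤ 1 := by
    intro j
    refine (MvPolynomial.totalDegree_sub _ _).trans ?_
    refine max_le ?_ (by simp only [MvPolynomial.totalDegree_C, zero_le])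
    refine MvPolynomial.totalDegree_finsetSum_le ?_
    intro i _
    refine (MvPolynomial.totalDegree_mul _ _).trans ?_
    simp only [MvPolynomial.totalDegree_C, MvPolynomial.totalDegree_X, zero_add, le_refl]
  have hLeval : ∀ (a : Fin n → F), (∀ i, a i = 0 ∨ a i = 1) → ∀ j,
      MvPolynomial.eval a (L j) = (∑ i, α i * a i - β) ^ (r + 2) ^ j := by
    intro a ha j
    rw [sub_pow_char_pow, sum_pow_char_pow]
    simp only [L, map_sub, map_sum, map_mul, MvPolynomial.eval_C, MvPolynomial.eval_X]
    congr 1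
    refine Finset.sum_congr rfl fun i _ => ?_
    rw [mul_pow]
    rcases ha i with h | h <;> simp [h]
  let A : MvPolynomial (Fin n) F := L 0 ^ r * ∏ j ∈ Finset.range m, L (j + 1) ^ (r + 1)
  have hAL : A * L 0 = ∏ j ∈ Finset.range (m + 1), L j ^ (r + 1) := by
    rw [Finset.prod_range_succ']
    simp only [A]
    ring
  have hpow : ∀ j s, (L j ^ s).totalDegree ≤ s := fun j s =>
    (MvPolynomial.totalDegree_pow _ _).trans
      ((Nat.mul_le_mul_left s (hLdeg j)).trans (by simp))
  have hAdeg : A.totalDegree ≤ (m + 1) * (r + 1) := by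
    refine (MvPolynomial.totalDegree_mul _ _).trans ?_
    have h1 := hpow 0 r
    have h2 : (∏ j ∈ Finset.range m, L (j + 1) ^ (r + 1)).totalDegree ≤ m * (r + 1) := by
      refine (MvPolynomial.totalDegree_finsetProd _ _).trans ?_
      refine (Finset.sum_le_card_nsmul _ _ (r + 1) fun j _ => hpow _ _).trans ?_
      simp
    linarith
  have hfdeg : (A * L 0 - 1).totalDegree ≤ (m + 1) * (r + 1) := by
    refine (MvPolynomial.totalDegree_sub _ _).trans (max_le ?_ (by simp))
    rw [hAL]
    refine (MvPolynomial.totalDegree_finsetProd _ _).trans ?_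
    refine (Finset.sum_le_card_nsmul _ _ (r + 1) fun j _ => hpow _ _).trans ?_
    simp
  have hexp : (∑ j ∈ Finset.range (m + 1), (r + 2) ^ j) * (r + 1) = (r + 2) ^ (m + 1) - 1 := by
    have h3 := geom_sum_mul_add (r + 1) (m + 1)
    exact Nat.eq_sub_of_add_eq h3
  obtain ⟨h, hh, hf⟩ := MvPolynomial.combinatorial_nullstellensatz_exists_linearCombination
    (fun _ : Fin n => ({0, 1} : Finset F)) (fun _ => by simp) (A * L 0 - 1) (by
      intro a ha
      have ha' : ∀ i, a i = 0 ∨ a i = 1 := fun i => by simpa using ha i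
      have hne : (∑ i, α i * a i - β) ≠ 0 := sub_ne_zero.mpr (hunsat a ha')
      rw [hAL, map_sub, map_prod, map_one]
      simp only [map_pow, hLeval a ha', ← pow_mul]
      rw [Finset.prod_pow_eq_pow_sum, ← Finset.sum_mul, hexp, ← hcard,
        FiniteField.pow_card_sub_one_eq_one _ hne, sub_self])
  have hP : ∀ i : Fin n, (∏ s ∈ ({0, 1} : Finset F), (MvPolynomial.X i - MvPolynomial.C s))
      = (MvPolynomial.X i ^ 2 - MvPolynomial.X i : MvPolynomial (Fin n) F) := by
    intro i
    rw [Finset.prod_pair zero_ne_one]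
    simp
    ring
  simp only [hP] at hh hf
  rw [hL0]
  refine ⟨A, fun j => - h j, ?_, hAdeg, ?_⟩
  · rw [Finsupp.linearCombination_apply, Finsupp.sum_fintype _ _ (by simp)] at hf
    simp only [smul_eq_mul] at hf
    simp only [neg_mul, Finset.sum_neg_distrib, ← hf]
    ring
  · intro j
    rw [MvPolynomial.totalDegree_neg]
    by_cases h0 : h j = 0
    · simp [h0]
    have hne : (MvPolynomial.X j ^ 2 - MvPolynomial.X j : MvPolynomial (Fin n) F) ≠ 0 := by
      rw [← hP]
      refine Finset.prod_ne_zero_iff.mpr fun s _ hs => ?_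
      have := congrArg (MvPolynomial.eval fun _ => s + 1) hs
      simp at this
    have h1 := hh j
    rw [MvPolynomial.totalDegree_mul_of_isDomain hne h0] at h1
    have : r + 2 - 1 = r + 1 := rfl
    rw [this]
    omega
end

section
/- Let p be a prime, k ≥ 1, and let F be a finite field with p^k elements. Let α_1,…,α_n, β ∈ F satisfy Σ_{i=1}^n α_i a_i ≠ β for every a ∈ {0,1}^n. If f ∈ F[x_1,…,x_n] is a multilinear polynomial satisfying f(a)·(Σ_{i=1}^n α_i a_i − β) = 1 for every a ∈ {0,1}^n, then the total degree of f is at most k(p−1). -/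
open MvPolynomial in
theorem exists_ml_aux {F : Type*} [Field F] {n : ℕ} (G : MvPolynomial (Fin n) F) :
    ∃ g : MvPolynomial (Fin n) F, (∀ i, g.degreeOf i ≤ 1) ∧ g.totalDegree ≤ G.totalDegree ∧
      ∀ a : Fin n → F, (∀ i, a i = 0 ∨ a i = 1) → eval a g = eval a G := by
  classical
  let r : (Fin n →₀ ℕ) → (Fin n →₀ ℕ) := fun s => s.mapRange (fun m => min m 1) (by simp)
  refine ⟨∑ s ∈ G.support, monomial (r s) (G.coeff s), ?_, ?_, ?_⟩
  · intro i
    refine (degreeOf_sum_le i _ _).trans (Finset.sup_le fun s hs => ?_)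
    rw [degreeOf_monomial_eq _ _ (mem_support_iff.mp hs)]
    simp [r]
  · refine totalDegree_finsetSum_le fun s hs => ?_
    refine le_trans ?_ (le_totalDegree hs)
    rw [totalDegree_monomial _ (mem_support_iff.mp hs)]
    rw [Finsupp.sum_fintype _ _ (by simp), Finsupp.sum_fintype _ _ (by simp)]
    exact Finset.sum_le_sum fun i _ => by simp [r]
  · intro a ha
    rw [map_sum]
    conv_rhs => rw [eval_eq' a G]
    refine Finset.sum_congr rfl fun s _ => ?_
    rw [eval_monomial, Finsupp.prod_fintype _ _ (by simp)]
    congr 1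
    refine Finset.prod_congr rfl fun i _ => ?_
    rcases ha i with h | h
    · rw [h]
      rcases Nat.eq_zero_or_pos (s i) with h0 | h0
      · simp [r, h0]
      · have : min (s i) 1 = 1 := by omega
        simp [r, this, h0.ne']
    · simp [h]

open MvPolynomial in
theorem exists_inv_aux (p : ℕ) (hp : p.Prime) (k : ℕ) (hk : 1 ≤ k)
    (F : Type*) [Field F] [Fintype F] (hcard : Fintype.card F = p ^ k)
    (n : ℕ) (α : Fin n → F) (β : F) :
    ∃ G : MvPolynomial (Fin n) F, G.totalDegree ≤ k * (p - 1) ∧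
      ∀ a : Fin n → F, (∀ i, a i = 0 ∨ a i = 1) → (∑ i, α i * a i) ≠ β →
        eval a G * ((∑ i, α i * a i) - β) = 1 := by
  classical
  have : Fact p.Prime := ⟨hp⟩
  have : CharP F p := charP_of_card_eq_prime_pow hcard
  obtain ⟨m, rfl⟩ : ∃ m, k = m + 1 := ⟨k - 1, by omega⟩
  obtain ⟨t, rfl⟩ : ∃ t, p = t + 2 := ⟨p - 2, by have := hp.two_le; omega⟩
  let L : ℕ → MvPolynomial (Fin n) F := fun j =>
    ∑ i, C (α i ^ (t + 2) ^ j) * X i - C (β ^ (t + 2) ^ j)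
  have hL : ∀ j, (L j).totalDegree ≤ 1 := by
    intro j
    refine (totalDegree_sub_C_le _ _).trans (totalDegree_finsetSum_le fun i _ => ?_)
    refine (totalDegree_mul _ _).trans ?_
    rw [totalDegree_C, totalDegree_X]
  have hLp : ∀ j e, (L j ^ e).totalDegree ≤ e := by
    intro j e
    exact (totalDegree_pow _ _).trans (by nlinarith [hL j])
  have hev : ∀ j (a : Fin n → F), (∀ i, a i = 0 ∨ a i = 1) →
      eval a (L j) = ((∑ i, α i * a i) - β) ^ (t + 2) ^ j := by
    intro j a ha
    rw [sub_pow_char_pow, sum_pow_char_pow]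
    simp only [L, map_sub, map_sum, map_mul, eval_C, eval_X]
    congr 1
    refine Finset.sum_congr rfl fun i _ => ?_
    rw [mul_pow]
    rcases ha i with h | h <;> simp [h]
  refine ⟨L 0 ^ t * ∏ j ∈ Finset.range m, L (j + 1) ^ (t + 1), ?_, ?_⟩
  · refine (totalDegree_mul _ _).trans ?_
    have h1 := hLp 0 t
    have h2 : (∏ j ∈ Finset.range m, L (j + 1) ^ (t + 1)).totalDegree ≤ m * (t + 1) := by
      refine (totalDegree_finsetProd _ _).trans ?_
      refine (Finset.sum_le_sum fun j _ => hLp (j + 1) (t + 1)).trans ?_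
      simp
    have : t + 2 - 1 = t + 1 := rfl
    rw [this]
    nlinarith
  · intro a ha hne
    have hne' : (∑ i, α i * a i) - β ≠ 0 := sub_ne_zero.mpr hne
    rw [map_mul, map_prod]
    simp only [map_pow, hev _ a ha]
    generalize (∑ i, α i * a i) - β = x at hne'
    have key : ∀ m : ℕ, (x ^ (t + 2) ^ 0) ^ t *
        (∏ j ∈ Finset.range m, (x ^ (t + 2) ^ (j + 1)) ^ (t + 1)) * x * x
        = x ^ (t + 2) ^ (m + 1) := by
      intro m
      induction m with
      | zero => simp; ring
      | succ m ih =>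
        rw [Finset.prod_range_succ]
        calc _ = ((x ^ (t + 2) ^ 0) ^ t *
            (∏ j ∈ Finset.range m, (x ^ (t + 2) ^ (j + 1)) ^ (t + 1)) * x * x) *
              (x ^ (t + 2) ^ (m + 1)) ^ (t + 1) := by ring
          _ = _ := by rw [ih]; ring
    have h := key m
    rw [← hcard, FiniteField.pow_card] at h
    exact mul_right_cancel₀ hne' (h.trans (one_mul x).symm)


/-- Over `F = F_{p^k}`, if `∑ i, α i a i ≠ β` for all Boolean `a`,
then the multilinear polynomial agreeing with `1/(∑ i, α i x i - β)` on the Boolean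
cube has total degree at most `k(p-1)`. -/
theorem degree_of_inverse_polynomial
    (p : ℕ) (hp : p.Prime) (k : ℕ) (hk : 1 ≤ k)
    (F : Type*) [Field F] [Fintype F] (hcard : Fintype.card F = p ^ k)
    (n : ℕ) (α : Fin n → F) (β : F)
    (hunsat : ∀ a : Fin n → F, (∀ i, a i = 0 ∨ a i = 1) → (∑ i, α i * a i) ≠ β)
    (f : MvPolynomial (Fin n) F) (hml : ∀ i, f.degreeOf i ≤ 1)
    (hagree : ∀ a : Fin n → F, (∀ i, a i = 0 ∨ a i = 1) →
      MvPolynomial.eval a f * ((∑ i, α i * a i) - β) = 1) :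
    f.totalDegree ≤ k * (p - 1) := by
  classical
  obtain ⟨G, hG, hGe⟩ := exists_inv_aux p hp k hk F hcard n α β
  obtain ⟨g, hg1, hg2, hg3⟩ := exists_ml_aux G
  have : f - g = 0 := by
    refine MvPolynomial.eq_zero_of_eval_zero_at_prod_finset (f - g) (fun _ => {0, 1}) ?_ ?_
    · intro i
      have h1 := MvPolynomial.degreeOf_sub_le i f g
      have h2 := hml i
      have h3 := hg1 i
      have : ({0, 1} : Finset F).card = 2 := Finset.card_pair zero_ne_one
      rw [this]
      have := max_le h2 h3
      omega
    · intro a ha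
      have ha' : ∀ i, a i = 0 ∨ a i = 1 := fun i => by simpa using ha i
      have hne := hunsat a ha'
      rw [map_sub, hg3 a ha', sub_eq_zero]
      exact mul_right_cancel₀ (sub_ne_zero.mpr hne) ((hagree a ha').trans (hGe a ha' hne).symm)
  rw [sub_eq_zero.mp this]
  exact hg2.trans hG
end

section
/- Let p be a prime, F a field of characteristic p, n ≥ 1, and let r = ⌊log_p n⌋ + 1 (so that p^{r−1} ≤ n < p^r). Let f ∈ F[x_1,…,x_n] be a multilinear symmetric polynomial. Then there exists a polynomial G ∈ F[y_0,…,y_{r−1}] in r variables such that f(a) = G(e_{p^0}(a), e_{p^1}(a), …, e_{p^{r−1}}(a)) for every a ∈ {0,1}^n. -/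
lemma aux_lucas (p : ℕ) (hp : p.Prime) (t : ℕ) : ∀ w : ℕ,
    w.choose (p ^ t) ≡ w / p ^ t [MOD p] := by
  haveI := Fact.mk hp
  induction t with
  | zero => intro w; simp; rfl
  | succ t ih =>
    intro w
    have h := Choose.choose_modEq_choose_mod_mul_choose_div_nat (n := w) (k := p ^ (t+1)) (p := p)
    have h1 : p ^ (t+1) % p = 0 := by simp [pow_succ]
    have h2 : p ^ (t+1) / p = p ^ t := by rw [pow_succ, Nat.mul_div_cancel _ hp.pos]
    rw [h1, h2, Nat.choose_zero_right, one_mul] at h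
    refine h.trans ((ih (w / p)).trans ?_)
    rw [Nat.div_div_eq_div_mul, pow_succ, mul_comm p]

lemma aux_digits (p : ℕ) (hp : p.Prime) (r : ℕ) : ∀ w w' : ℕ, w < p ^ r → w' < p ^ r →
    (∀ t < r, w / p ^ t ≡ w' / p ^ t [MOD p]) → w = w' := by
  induction r with
  | zero => intro w w' h h' _; simp at h h'; omega
  | succ r ih =>
    intro w w' h h' H
    have h0 := H 0 (by omega)
    simp only [pow_zero, Nat.div_one] at h0
    have h1 : w / p = w' / p := by
      apply ih
      · apply Nat.div_lt_of_lt_mul; rwa [mul_comm, ← pow_succ]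
      · apply Nat.div_lt_of_lt_mul; rwa [mul_comm, ← pow_succ]
      · intro t ht
        have := H (t+1) (by omega)
        rwa [pow_succ, mul_comm, ← Nat.div_div_eq_div_mul, ← Nat.div_div_eq_div_mul] at this
    rw [← Nat.div_add_mod w p, ← Nat.div_add_mod w' p, h1]
    congr 1

lemma aux_interp {σ F : Type*} [Field F] (V : Finset (σ → F)) (g : (σ → F) → F) :
    ∃ G : MvPolynomial σ F, ∀ v ∈ V, MvPolynomial.eval v G = g v := by
  classical
  have key : ∀ s s' : σ → F, ∃ P : MvPolynomial σ F, s ≠ s' →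
      MvPolynomial.eval s P = 1 ∧ MvPolynomial.eval s' P = 0 := by
    intro s s'
    by_cases h : s = s'
    · exact ⟨0, fun h' => absurd h h'⟩
    · obtain ⟨i, hi⟩ := Function.ne_iff.mp h
      refine ⟨MvPolynomial.C (s i - s' i)⁻¹ * (MvPolynomial.X i - MvPolynomial.C (s' i)),
        fun _ => ⟨?_, ?_⟩⟩
      · simp [inv_mul_cancel₀ (sub_ne_zero.mpr hi)]
      · simp
  choose P hP using key
  refine ⟨∑ s ∈ V, MvPolynomial.C (g s) * ∏ s' ∈ V.erase s, P s s', fun v hv => ?_⟩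
  rw [map_sum, Finset.sum_eq_single v]
  · rw [map_mul, map_prod, Finset.prod_eq_one]
    · simp
    · intro s' hs'
      exact (hP v s' (Finset.ne_of_mem_erase hs').symm).1
  · intro s hs hsv
    rw [map_mul, map_prod, Finset.prod_eq_zero (i := v)]
    · simp
    · exact Finset.mem_erase.mpr ⟨hsv.symm, hv⟩
    · exact (hP s v hsv).2
  · intro h; exact absurd hv h

lemma aux_esymm {F : Type*} [Field F] (n k : ℕ) (S : Finset (Fin n)) :
    MvPolynomial.eval (fun i => if i ∈ S then (1 : F) else 0) (MvPolynomial.esymm (Fin n) F k)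
      = ((S.card.choose k : ℕ) : F) := by
  classical
  rw [MvPolynomial.esymm, map_sum]
  have h : ∀ T : Finset (Fin n), MvPolynomial.eval (fun i => if i ∈ S then (1 : F) else 0)
      (∏ i ∈ T, MvPolynomial.X i) = if T ⊆ S then 1 else 0 := by
    intro T
    simp only [map_prod, MvPolynomial.eval_X]
    rw [Finset.prod_ite_zero]
    simp [Finset.subset_iff]
  simp only [h]
  rw [Finset.sum_boole, ← Finset.card_powersetCard]
  congr 2
  ext T
  simp [Finset.mem_powersetCard, and_comm]

lemma aux_sym {F : Type*} [Field F] (n : ℕ) (f : MvPolynomial (Fin n) F) (hsym : f.IsSymmetric)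
    (S T : Finset (Fin n)) (h : S.card = T.card) :
    MvPolynomial.eval (fun i => if i ∈ S then (1 : F) else 0) f =
    MvPolynomial.eval (fun i => if i ∈ T then (1 : F) else 0) f := by
  classical
  let e0 : {x // x ∈ S} ≃ {x // x ∈ T} := Finset.equivOfCardEq h
  let e := e0.extendSubtype
  have he : ∀ i, e i ∈ T ↔ i ∈ S := by
    intro i
    by_cases hi : i ∈ S
    · simp only [hi, iff_true]; exact e0.extendSubtype_mem i hi
    · simp only [hi, iff_false]; exact e0.extendSubtype_not_mem i hi
  conv_rhs => rw [← hsym e]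
  rw [MvPolynomial.eval_rename]
  congr 2
  funext i
  simp [he]

/-- Over a field of characteristic `p`, every multilinear symmetric
polynomial in `n ≥ 1` variables agrees, on the Boolean cube, with a polynomial `G` in
the `r = ⌊log_p n⌋ + 1` elementary symmetric polynomials of `p`-power degree
`e_{p^0}, e_{p^1}, …, e_{p^{r-1}}`. -/
theorem symmetric_function_of_p_power_esymms
    (p : ℕ) (hp : p.Prime) (F : Type*) [Field F] [CharP F p]
    (n : ℕ) (hn : 1 ≤ n)
    (f : MvPolynomial (Fin n) F) (hml : ∀ i, f.degreeOf i ≤ 1)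
    (hsym : f.IsSymmetric) :
    ∃ G : MvPolynomial (Fin (Nat.log p n + 1)) F,
      ∀ a : Fin n → F, (∀ i, a i = 0 ∨ a i = 1) →
        MvPolynomial.eval a f =
          MvPolynomial.eval
            (fun t : Fin (Nat.log p n + 1) =>
              MvPolynomial.eval a (MvPolynomial.esymm (Fin n) F (p ^ (t : ℕ)))) G := by
  classical
  let A : Finset (Fin n) → Fin n → F := fun S i => if i ∈ S then (1 : F) else 0
  let v : Finset (Fin n) → Fin (Nat.log p n + 1) → F := fun S t =>
    MvPolynomial.eval (A S) (MvPolynomial.esymm (Fin n) F (p ^ (t : ℕ)))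
  have hv : ∀ S T, v S = v T → MvPolynomial.eval (A S) f = MvPolynomial.eval (A T) f := by
    intro S T hST
    apply aux_sym n f hsym
    have hlt : ∀ S : Finset (Fin n), S.card < p ^ (Nat.log p n + 1) := fun S =>
      lt_of_le_of_lt (by simpa using S.card_le_univ) (Nat.lt_pow_succ_log_self hp.one_lt n)
    apply aux_digits p hp (Nat.log p n + 1) _ _ (hlt S) (hlt T)
    intro t ht
    have h1 := congrFun hST ⟨t, ht⟩
    simp only [v, A, aux_esymm] at h1
    rw [CharP.natCast_eq_natCast F p] at h1
    exact ((aux_lucas p hp t _).symm.trans h1).trans (aux_lucas p hp t _)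
  obtain ⟨G, hG⟩ := aux_interp (Finset.univ.image v)
    (fun y => if h : ∃ S, v S = y then MvPolynomial.eval (A h.choose) f else 0)
  refine ⟨G, fun a ha => ?_⟩
  obtain ⟨S, rfl⟩ : ∃ S, a = A S := by
    refine ⟨Finset.univ.filter (fun i => a i = 1), ?_⟩
    funext i
    rcases ha i with h | h <;> simp [A, h]
  have h := hG (v S) (Finset.mem_image_of_mem _ (Finset.mem_univ _))
  have hex : ∃ S', v S' = v S := ⟨S, rfl⟩
  rw [dif_pos hex] at h
  exact (hv _ _ hex.choose_spec).symm.trans h.symm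
end

section
/- Let F be a field, n ≥ 1, and 1 ≤ a, b ≤ n. Then there exist scalars c_1,…,c_n ∈ F and polynomials R_1,…,R_n ∈ F[x_1,…,x_n] such that e_a(x)·e_b(x) = Σ_{i=1}^n c_i·e_i(x) + Σ_{j=1}^n R_j(x)·(x_j² − x_j). In particular, e_a(v)·e_b(v) = Σ_{i=1}^n c_i·e_i(v) for every v ∈ {0,1}^n; that is, the multilinearization of a product of two elementary symmetric polynomials is an F-linear combination of elementary symmetric polynomials. -/
theorem aux_prod_idem {ι Q : Type*} [DecidableEq ι] [CommRing Q] (x : ι → Q)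
    (hx : ∀ i, x i * x i = x i) (S T : Finset ι) :
    (∏ i ∈ S, x i) * (∏ i ∈ T, x i) = ∏ i ∈ S ∪ T, x i := by
  rw [← Finset.prod_union_inter]
  have h : S ∩ T ⊆ S ∪ T := fun i hi => by
    simp only [Finset.mem_inter, Finset.mem_union] at *
    exact Or.inl hi.1
  rw [← Finset.prod_sdiff h, mul_assoc, ← Finset.prod_mul_distrib]
  simp only [hx]

/-- number of pairs of an `a`-set and a `b`-set with union `U` -/
def auxN (n a b : ℕ) (U : Finset (Fin n)) : ℕ :=
  (((Finset.powersetCard a Finset.univ) ×ˢ (Finset.powersetCard b Finset.univ)).filter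
    (fun p : Finset (Fin n) × Finset (Fin n) => p.1 ∪ p.2 = U)).card

theorem auxN_congr (n a b : ℕ) (U V : Finset (Fin n)) (h : U.card = V.card) :
    auxN n a b U = auxN n a b V := by
  obtain ⟨σ, hσ⟩ : ∃ σ : Equiv.Perm (Fin n), U.map σ.toEmbedding = V := by
    let e : {x // x ∈ U} ≃ {x // x ∈ V} := Finset.equivOfCardEq h
    refine ⟨e.extendSubtype, ?_⟩
    apply Finset.eq_of_subset_of_card_le
    · intro y hy
      obtain ⟨x, hx, rfl⟩ := Finset.mem_map.1 hy
      exact e.extendSubtype_mem x hx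
    · simp [h]
  unfold auxN
  refine Finset.card_equiv (σ.finsetCongr.prodCongr σ.finsetCongr) ?_
  rintro ⟨S, T⟩
  simp only [Finset.mem_filter, Finset.mem_product, Finset.mem_powersetCard, Finset.subset_univ,
    true_and, Equiv.prodCongr_apply, Prod.map, Equiv.finsetCongr_apply, Finset.card_map,
    ← Finset.map_union, ← hσ, Finset.map_inj]

theorem multilinearization_product_two_esymm
    (F : Type*) [Field F] (n : ℕ) (hn : 1 ≤ n)
    (a b : ℕ) (ha : 1 ≤ a) (ha' : a ≤ n) (hb : 1 ≤ b) (hb' : b ≤ n) :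
    ∃ (c : ℕ → F) (R : Fin n → MvPolynomial (Fin n) F),
      (MvPolynomial.esymm (Fin n) F a * MvPolynomial.esymm (Fin n) F b =
        (∑ i ∈ Finset.Icc 1 n, MvPolynomial.C (c i) * MvPolynomial.esymm (Fin n) F i) +
          ∑ j, R j * (MvPolynomial.X j ^ 2 - MvPolynomial.X j)) ∧
      ∀ v : Fin n → F, (∀ i, v i = 0 ∨ v i = 1) →
        MvPolynomial.eval v (MvPolynomial.esymm (Fin n) F a) *
            MvPolynomial.eval v (MvPolynomial.esymm (Fin n) F b) =
          ∑ i ∈ Finset.Icc 1 n, c i * MvPolynomial.eval v (MvPolynomial.esymm (Fin n) F i) := by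
  classical
  obtain ⟨m, hm⟩ : ∃ m : ℕ → ℕ, ∀ U : Finset (Fin n), auxN n a b U = m U.card := by
    refine ⟨fun k => if h : ∃ U : Finset (Fin n), U.card = k then auxN n a b h.choose else 0, ?_⟩
    intro U
    have h : ∃ V : Finset (Fin n), V.card = U.card := ⟨U, rfl⟩
    simp only [h, dif_pos]
    exact auxN_congr n a b _ _ h.choose_spec.symm
  have key : ∃ R : Fin n → MvPolynomial (Fin n) F,
      MvPolynomial.esymm (Fin n) F a * MvPolynomial.esymm (Fin n) F b =
        (∑ i ∈ Finset.Icc 1 n,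
          MvPolynomial.C ((m i : ℕ) : F) * MvPolynomial.esymm (Fin n) F i) +
          ∑ j, R j * (MvPolynomial.X j ^ 2 - MvPolynomial.X j) := by
    let I : Ideal (MvPolynomial (Fin n) F) :=
      Ideal.span (Set.range fun j => MvPolynomial.X j ^ 2 - MvPolynomial.X j)
    suffices h : MvPolynomial.esymm (Fin n) F a * MvPolynomial.esymm (Fin n) F b -
        (∑ i ∈ Finset.Icc 1 n,
          MvPolynomial.C ((m i : ℕ) : F) * MvPolynomial.esymm (Fin n) F i) ∈ I by
      obtain ⟨R, hR⟩ := Ideal.mem_span_range_iff_exists_fun.1 h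
      exact ⟨R, by rw [hR]; ring⟩
    rw [← Ideal.Quotient.mk_eq_mk_iff_sub_mem]
    let x : Fin n → MvPolynomial (Fin n) F ⧸ I := fun i => Ideal.Quotient.mk I (MvPolynomial.X i)
    have hx : ∀ i, x i * x i = x i := by
      intro i
      simp only [x]
      rw [← map_mul, Ideal.Quotient.mk_eq_mk_iff_sub_mem, ← sq]
      exact Ideal.subset_span ⟨i, rfl⟩
    have he : ∀ k, Ideal.Quotient.mk I (MvPolynomial.esymm (Fin n) F k) =
        ∑ t ∈ Finset.powersetCard k Finset.univ, ∏ i ∈ t, x i := by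
      intro k
      simp [MvPolynomial.esymm, x]
    simp only [map_mul, map_sum, he, map_natCast]
    rw [Finset.sum_mul_sum, ← Finset.sum_product']
    simp only [aux_prod_idem x hx]
    rw [← Finset.sum_fiberwise_of_maps_to
      (t := (Finset.univ : Finset (Finset (Fin n)))) (g := fun p => p.1 ∪ p.2)
      (fun _ _ => Finset.mem_univ _)]
    have h1 : ∀ U : Finset (Fin n), ∑ p ∈ ((Finset.powersetCard a Finset.univ) ×ˢ
        (Finset.powersetCard b Finset.univ)).filter
        (fun p : Finset (Fin n) × Finset (Fin n) => p.1 ∪ p.2 = U), ∏ i ∈ p.1 ∪ p.2, x i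
        = (m U.card : MvPolynomial (Fin n) F ⧸ I) * ∏ i ∈ U, x i := by
      intro U
      rw [← hm, auxN, ← nsmul_eq_mul, ← Finset.sum_const]
      refine Finset.sum_congr rfl fun p hp => ?_
      rw [(Finset.mem_filter.1 hp).2]
    simp only [h1]
    have h0 : m 0 = 0 := by
      have := hm ∅
      rw [Finset.card_empty] at this
      rw [← this, auxN, Finset.card_eq_zero, Finset.filter_eq_empty_iff]
      rintro ⟨S, T⟩ hp hU
      simp only [Finset.mem_product, Finset.mem_powersetCard] at hp
      have hS : S = ∅ := (Finset.union_eq_empty.1 hU).1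
      have := hp.1.2
      rw [hS, Finset.card_empty] at this
      omega
    rw [← Finset.powerset_univ, Finset.sum_powerset, Finset.card_univ, Fintype.card_fin,
      Finset.sum_range_succ']
    have h2 : ∀ k, ∑ U ∈ Finset.powersetCard k (Finset.univ : Finset (Fin n)),
        (m U.card : MvPolynomial (Fin n) F ⧸ I) * ∏ i ∈ U, x i =
        (m k : MvPolynomial (Fin n) F ⧸ I) *
          ∑ U ∈ Finset.powersetCard k (Finset.univ : Finset (Fin n)), ∏ i ∈ U, x i := by
      intro k
      rw [Finset.mul_sum]
      refine Finset.sum_congr rfl fun U hU => ?_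
      rw [(Finset.mem_powersetCard.1 hU).2]
    simp only [h2, h0, Nat.cast_zero, zero_mul, add_zero]
    rw [Finset.range_eq_Ico, Finset.sum_Ico_add'
      (fun k => (m k : MvPolynomial (Fin n) F ⧸ I) *
          ∑ U ∈ Finset.powersetCard k (Finset.univ : Finset (Fin n)), ∏ i ∈ U, x i)]
    rfl
  obtain ⟨R, hR⟩ := key
  refine ⟨fun i => (m i : F), R, hR, fun v hv => ?_⟩
  have := congrArg (MvPolynomial.eval v) hR
  rw [map_mul, map_add, map_sum, map_sum] at this
  rw [this]
  have hz : ∑ j, MvPolynomial.eval v (R j * (MvPolynomial.X j ^ 2 - MvPolynomial.X j)) = 0 := by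
    refine Finset.sum_eq_zero fun j _ => ?_
    rcases hv j with h | h <;> simp [h]
  rw [hz, add_zero]
  simp only [map_mul, MvPolynomial.eval_C]
end
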